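/- arXiv:2602.21118 — 3 statements merged into one kernel-verified Lean document; each statement's English description precedes it below -/
import Mathlib

section
/- Let 1<p<∞ and let Ω ⊆ ℝ^N be an open set. Then the embedding W^{1,p}_0(Ω) ↪ L^p(Ω) is compact if and only if E_p(Ω) = +∞. -/
open MeasureTheory Filter Topology Metric Set ENNReal
open scoped RealInnerProductSpace

noncomputable section

/-- Euclidean space `ℝ^N`. -/
abbrev EucN (N : ℕ) := EuclideanSpace ℝ (Fin N)

/-- A test function on an open set `Ω ⊆ ℝ^N`: smooth, with compact support contained in `Ω`. -/
def IsTestFun {N : ℕ} (Ω : Set (EucN N)) (φ : EucN N → ℝ) : Prop :=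
  ContDiff ℝ (⊤ : ℕ∞) φ ∧ HasCompactSupport φ ∧ tsupport φ ⊆ Ω

/-- Pairs `(u, g)` in `L^q × L^q`, thought of as a function together with its (weak) gradient. -/
abbrev SobPair (N : ℕ) (q : ℝ≥0∞) :=
  Lp ℝ q (volume : Measure (EucN N)) × Lp (EucN N) q (volume : Measure (EucN N))

/-- A pair given (a.e.) by a test function and its gradient. -/
def IsTestPair {N : ℕ} (q : ℝ≥0∞) (Ω : Set (EucN N)) (w : SobPair N q) : Prop :=
  ∃ ψ : EucN N → ℝ, IsTestFun Ω ψ ∧ (⇑w.1 =ᵐ[volume] ψ) ∧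
    (⇑w.2 =ᵐ[volume] fun x => gradient ψ x)

theorem fact_one_le_ofReal {p : ℝ} (hp : 1 ≤ p) : Fact (1 ≤ ENNReal.ofReal p) :=
  ⟨ENNReal.one_le_ofReal.mpr hp⟩

/-- The Sobolev space `W^{1,p}_0(Ω)`, realized as the closure in `L^p × L^p` of the set of
pairs (test function, its gradient). -/
def W10 (N : ℕ) (p : ℝ) (hp : 1 ≤ p) (Ω : Set (EucN N)) :
    Set (SobPair N (ENNReal.ofReal p)) :=
  letI := fact_one_le_ofReal hp
  closure {w | IsTestPair (ENNReal.ofReal p) Ω w}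

/-- The first eigenvalue `λ_{1,p}(Ω)` (as an extended real, `∞` if there are no admissible
functions). -/
def lambda1p (N : ℕ) (p : ℝ) (hp : 1 ≤ p) (Ω : Set (EucN N)) : ℝ≥0∞ :=
  sInf {t | ∃ w ∈ W10 N p hp Ω, (∫ x, |w.1 x| ^ p) = 1 ∧
    t = ENNReal.ofReal (∫ x, ‖w.2 x‖ ^ p)}

/-- The `L^p` Poincaré constant "at infinity" `E_p(Ω)`. -/
def Einfty (N : ℕ) (p : ℝ) (hp : 1 ≤ p) (Ω : Set (EucN N)) : ℝ≥0∞ :=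
  ⨆ R ∈ Set.Ioi (0 : ℝ), lambda1p N p hp (Ω \ closure (ball (0 : EucN N) R))

/-- There is a continuous odd map from `A` to the unit sphere `S^{j-1} ⊆ ℝ^j`. -/
def HasOddMapToSphere {Z : Type*} [NormedAddCommGroup Z] (A : Set Z) (j : ℕ) : Prop :=
  ∃ f : Z → EuclideanSpace ℝ (Fin j),
    ContinuousOn f A ∧ (∀ x ∈ A, ‖f x‖ = 1) ∧ ∀ x ∈ A, f (-x) = -f x

/-- The Krasnosel'skii genus of `A` is at least `k`. -/
def genusGE {Z : Type*} [NormedAddCommGroup Z] (A : Set Z) (k : ℕ) : Prop :=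
  ∀ j : ℕ, HasOddMapToSphere A j → k ≤ j

/-- The Krasnosel'skii genus of `A`, valued in `ℕ∞`. -/
def genus {Z : Type*} [NormedAddCommGroup Z] (A : Set Z) : ℕ∞ :=
  sInf {k : ℕ∞ | ∃ j : ℕ, (j : ℕ∞) = k ∧ HasOddMapToSphere A j}

/-- The class `𝒲_{k,p}(Ω)` of compact symmetric subsets of `S_p(Ω) ∩ W^{1,p}_0(Ω)` with
genus at least `k`. -/
def SobClass (N : ℕ) (p : ℝ) (hp : 1 ≤ p) (Ω : Set (EucN N)) (k : ℕ) :
    Set (Set (SobPair N (ENNReal.ofReal p))) :=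
  letI := fact_one_le_ofReal hp
  {K | K ⊆ W10 N p hp Ω ∧ (∀ w ∈ K, (∫ x, |w.1 x| ^ p) = 1) ∧
       (∀ w ∈ K, -w ∈ K) ∧ IsCompact K ∧ genusGE K k}

/-- The `k`-th minmax Ljusternik–Schnirelmann value `λ_{k,p}^{LS}(Ω)`. -/
def lambdaLS (N : ℕ) (p : ℝ) (hp : 1 ≤ p) (Ω : Set (EucN N)) (k : ℕ) : ℝ≥0∞ :=
  ⨅ K ∈ SobClass N p hp Ω k, ⨆ w ∈ K, ENNReal.ofReal (∫ x, ‖w.2 x‖ ^ p)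

/-- `w = (u, ∇u)` is an eigenfunction of the Dirichlet `p`-Laplacian on `Ω` associated to the
eigenvalue `lam`. -/
def IsEigenfunction (N : ℕ) (p : ℝ) (hp : 1 ≤ p) (Ω : Set (EucN N)) (lam : ℝ)
    (w : SobPair N (ENNReal.ofReal p)) : Prop :=
  w ∈ W10 N p hp Ω ∧ w ≠ 0 ∧
  ∀ φ : EucN N → ℝ, IsTestFun Ω φ →
    (∫ x, ‖w.2 x‖ ^ (p - 2) * ⟪w.2 x, gradient φ x⟫) =
      lam * ∫ x, |w.1 x| ^ (p - 2) * (w.1 x) * φ x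

/-- `lam` is an eigenvalue of the Dirichlet `p`-Laplacian on `Ω`. -/
def IsEigenvalue (N : ℕ) (p : ℝ) (hp : 1 ≤ p) (Ω : Set (EucN N)) (lam : ℝ) : Prop :=
  ∃ w, IsEigenfunction N p hp Ω lam w

/-- `v = (v, ∇v)` is a non-negative weak subsolution of `-Δ_p u = lam · u^{p-1}` in `Ω`. -/
def IsSubsolution (N : ℕ) (p : ℝ) (hp : 1 ≤ p) (Ω : Set (EucN N)) (lam : ℝ)
    (v : SobPair N (ENNReal.ofReal p)) : Prop :=
  v ∈ W10 N p hp Ω ∧ (∀ᵐ x, 0 ≤ v.1 x) ∧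
  ∀ φ ∈ W10 N p hp Ω, (∀ᵐ x, 0 ≤ φ.1 x) →
    (∫ x, ‖v.2 x‖ ^ (p - 2) * ⟪v.2 x, φ.2 x⟫) ≤ lam * ∫ x, (v.1 x) ^ (p - 1) * φ.1 x

/-- A strongly confining potential. -/
def StronglyConfining (N : ℕ) (V : EucN N → ℝ) : Prop :=
  LocallyIntegrable V volume ∧ (∀ᵐ x, 0 ≤ V x) ∧
  ∃ α : ℝ → ℝ, (∀ R > (0 : ℝ), 0 < α R) ∧ MonotoneOn α (Set.Ioi 0) ∧
    Tendsto α atTop atTop ∧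
    ∀ R > (0 : ℝ), ∀ᵐ x, x ∉ ball (0 : EucN N) R → α R ≤ V x

/-- Triples `(u, g, h)` in `L^q × L^q × L^q`; `h` plays the role of `V^{1/p} u` in the weighted
Sobolev space. -/
abbrev SobTriple (N : ℕ) (q : ℝ≥0∞) :=
  Lp ℝ q (volume : Measure (EucN N)) × Lp (EucN N) q (volume : Measure (EucN N)) ×
    Lp ℝ q (volume : Measure (EucN N))

/-- A triple given (a.e.) by a test function, its gradient, and `V^{1/p}` times it. -/
def IsTestTriple {N : ℕ} (q : ℝ≥0∞) (p : ℝ) (Ω : Set (EucN N)) (V : EucN N → ℝ)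
    (w : SobTriple N q) : Prop :=
  ∃ ψ : EucN N → ℝ, IsTestFun Ω ψ ∧ (⇑w.1 =ᵐ[volume] ψ) ∧
    (⇑w.2.1 =ᵐ[volume] fun x => gradient ψ x) ∧
    (⇑w.2.2 =ᵐ[volume] fun x => (V x) ^ (1/p) * ψ x)

/-- The weighted Sobolev space `W^{1,p}_0(Ω; V)`, realized as a closure of triples coming from
test functions; the norm topology of `L^p × L^p × L^p` on such triples corresponds exactly to
the weighted Sobolev norm `(∫|∇u|^p + ∫(1+V)|u|^p)^{1/p}`. -/
def W10V (N : ℕ) (p : ℝ) (hp : 1 ≤ p) (Ω : Set (EucN N)) (V : EucN N → ℝ) :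
    Set (SobTriple N (ENNReal.ofReal p)) :=
  letI := fact_one_le_ofReal hp
  closure {w | IsTestTriple (ENNReal.ofReal p) p Ω V w}

/-- The class `𝒲_{k,p}(Ω; V)` for the weighted space. -/
def SobClassV (N : ℕ) (p : ℝ) (hp : 1 ≤ p) (Ω : Set (EucN N)) (V : EucN N → ℝ) (k : ℕ) :
    Set (Set (SobTriple N (ENNReal.ofReal p))) :=
  letI := fact_one_le_ofReal hp
  {K | K ⊆ W10V N p hp Ω V ∧ (∀ w ∈ K, (∫ x, |w.1 x| ^ p) = 1) ∧
       (∀ w ∈ K, -w ∈ K) ∧ IsCompact K ∧ genusGE K k}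

/-- The perturbed minmax value `λ_{k,p}^{LS}(Ω; ε V)`, for the functional
`G(φ) = ∫|∇φ|^p + ε ∫ V |φ|^p`. -/
def lambdaLSV (N : ℕ) (p : ℝ) (hp : 1 ≤ p) (Ω : Set (EucN N)) (V : EucN N → ℝ)
    (ε : ℝ) (k : ℕ) : ℝ≥0∞ :=
  ⨅ K ∈ SobClassV N p hp Ω V k, ⨆ w ∈ K,
    ENNReal.ofReal ((∫ x, ‖w.2.1 x‖ ^ p) + ε * ∫ x, |w.2.2 x| ^ p)

/-- `w` is a constrained critical point, at level `lam`, of the perturbed functional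
`G(φ) = ∫|∇φ|^p + ε ∫ V |φ|^p` on the unit sphere of `L^p`. -/
def IsCriticalV (N : ℕ) (p : ℝ) (hp : 1 ≤ p) (Ω : Set (EucN N)) (V : EucN N → ℝ)
    (ε : ℝ) (lam : ℝ) (w : SobTriple N (ENNReal.ofReal p)) : Prop :=
  w ∈ W10V N p hp Ω V ∧ (∫ x, |w.1 x| ^ p) = 1 ∧
  ∀ φ : EucN N → ℝ, IsTestFun Ω φ →
    (∫ x, ‖w.2.1 x‖ ^ (p - 2) * ⟪w.2.1 x, gradient φ x⟫)
      + ε * ∫ x, V x * |w.1 x| ^ (p - 2) * (w.1 x) * φ x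
    = lam * ∫ x, |w.1 x| ^ (p - 2) * (w.1 x) * φ x

/-- The embedding `W^{1,p}_0(Ω) ↪ L^p(Ω)` is compact: every bounded sequence in `W^{1,p}_0(Ω)`
has a subsequence converging strongly in `L^p`. -/
def CompactSobolevEmbedding (N : ℕ) (p : ℝ) (hp : 1 ≤ p) (Ω : Set (EucN N)) : Prop :=
  ∀ w : ℕ → SobPair N (ENNReal.ofReal p), (∀ n, w n ∈ W10 N p hp Ω) →
    (∃ M : ℝ≥0∞, M ≠ ⊤ ∧ ∀ n, eLpNorm (⇑(w n).1) (ENNReal.ofReal p) volume ≤ M ∧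
        eLpNorm (⇑(w n).2) (ENNReal.ofReal p) volume ≤ M) →
    ∃ σ : ℕ → ℕ, StrictMono σ ∧ ∃ u : EucN N → ℝ, MemLp u (ENNReal.ofReal p) volume ∧
      Tendsto (fun n => eLpNorm (⇑(w (σ n)).1 - u) (ENNReal.ofReal p) volume) atTop (𝓝 0)



theorem jensen_lint {α : Type*} [MeasurableSpace α] (μ : Measure α) [IsProbabilityMeasure μ]
    (f : α → ℝ≥0∞) (hf : AEMeasurable f μ) {p : ℝ} (hp : 1 < p) :
    (∫⁻ x, f x ∂μ) ^ p ≤ ∫⁻ x, f x ^ p ∂μ := by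
  have hc : p.HolderConjugate (p / (p - 1)) := Real.HolderConjugate.conjExponent hp
  have h := ENNReal.lintegral_mul_le_Lp_mul_Lq μ hc hf (aemeasurable_const (b := (1 : ℝ≥0∞)))
  simp only [Pi.mul_apply, mul_one, ENNReal.one_rpow, lintegral_const, measure_univ] at h
  calc _ ≤ ((∫⁻ x, f x ^ p ∂μ) ^ (1 / p)) ^ p := by gcongr
    _ = _ := by rw [← ENNReal.rpow_mul, one_div_mul_cancel (by linarith), ENNReal.rpow_one]

theorem norm_gradient_eq {N : ℕ} (ψ : EucN N → ℝ) (x : EucN N) :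
    ‖gradient ψ x‖ₑ = ‖fderiv ℝ ψ x‖ₑ := by
  rw [gradient, ← ofReal_norm, LinearIsometryEquiv.norm_map, ofReal_norm]

theorem continuous_gradient {N : ℕ} {ψ : EucN N → ℝ} (h : ContDiff ℝ (⊤ : ℕ∞) ψ) :
    Continuous (fun x => gradient ψ x) := by
  unfold gradient
  exact (LinearIsometryEquiv.continuous _).comp (h.continuous_fderiv (by simp))

theorem trans_est {N : ℕ} {ψ : EucN N → ℝ} (hψ : ContDiff ℝ (⊤ : ℕ∞) ψ) {p : ℝ} (hp : 1 < p)
    (h : EucN N) :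
    ∫⁻ x, ‖ψ (x + h) - ψ x‖ₑ ^ p ≤ ‖h‖ₑ ^ p * ∫⁻ x, ‖gradient ψ x‖ₑ ^ p := by
  have hcg := continuous_gradient hψ
  have hcf : Continuous (fderiv ℝ ψ) := hψ.continuous_fderiv (by simp)
  have hd : Differentiable ℝ ψ := hψ.differentiable (by simp)
  let ν : Measure ℝ := volume.restrict (Ioc (0:ℝ) 1)
  have : IsProbabilityMeasure ν := ⟨by simp [ν]⟩
  have key : ∀ x, ‖ψ (x + h) - ψ x‖ₑ ^ p ≤
      ∫⁻ t, ‖h‖ₑ ^ p * ‖gradient ψ (x + t • h)‖ₑ ^ p ∂ν := by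
    intro x
    have hder : ∀ t ∈ uIcc (0:ℝ) 1, HasDerivAt (fun t : ℝ => ψ (x + t • h))
        (fderiv ℝ ψ (x + t • h) h) t := by
      intro t _
      have h1 : HasDerivAt (fun t : ℝ => x + t • h) h t := by
        simpa using ((hasDerivAt_id t).smul_const h).const_add x
      exact (hd _).hasFDerivAt.comp_hasDerivAt t h1
    have hcont : Continuous (fun t : ℝ => fderiv ℝ ψ (x + t • h) h) := by fun_prop
    have hint := intervalIntegral.integral_eq_sub_of_hasDerivAt hder
      (hcont.intervalIntegrable _ _)
    simp only [one_smul, zero_smul, add_zero] at hint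
    rw [← hint, intervalIntegral.integral_of_le zero_le_one]
    calc _ ≤ (∫⁻ t, ‖fderiv ℝ ψ (x + t • h) h‖ₑ ∂ν) ^ p := by
          gcongr; exact enorm_integral_le_lintegral_enorm _
      _ ≤ ∫⁻ t, ‖fderiv ℝ ψ (x + t • h) h‖ₑ ^ p ∂ν :=
          jensen_lint ν _ hcont.enorm.measurable.aemeasurable hp
      _ ≤ _ := by
          gcongr with t
          rw [← ENNReal.mul_rpow_of_nonneg _ _ (by linarith), norm_gradient_eq, mul_comm]
          gcongr
          exact ContinuousLinearMap.le_opENorm _ _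
  calc _ ≤ ∫⁻ x, ∫⁻ t, ‖h‖ₑ ^ p * ‖gradient ψ (x + t • h)‖ₑ ^ p ∂ν := lintegral_mono key
    _ = ∫⁻ t, ∫⁻ x, ‖h‖ₑ ^ p * ‖gradient ψ (x + t • h)‖ₑ ^ p ∂volume ∂ν := by
        apply lintegral_lintegral_swap
        apply Measurable.aemeasurable
        have : Continuous (fun z : EucN N × ℝ => gradient ψ (z.1 + z.2 • h)) :=
          hcg.comp (by fun_prop)
        exact ((this.enorm.measurable).pow_const p).const_mul _
    _ = ∫⁻ _t, ‖h‖ₑ ^ p * ∫⁻ x, ‖gradient ψ x‖ₑ ^ p ∂volume ∂ν := by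
        congr 1; ext t
        rw [lintegral_const_mul]
        · rw [lintegral_add_right_eq_self (fun x => ‖gradient ψ x‖ₑ ^ p) (t • h)]
        · have : Continuous (fun z : EucN N => gradient ψ (z + t • h)) :=
            hcg.comp (by fun_prop)
          exact (this.enorm.measurable).pow_const p
    _ = _ := by simp

def sobCell (N : ℕ) (δ : ℝ) (k : Fin N → ℤ) : Set (EucN N) := {x | ∀ i, ⌊x i / δ⌋ = k i}

theorem sobCell_eq (N : ℕ) {δ : ℝ} (hδ : 0 < δ) (k : Fin N → ℤ) :
    sobCell N δ k = (@WithLp.ofLp 2 (Fin N → ℝ)) ⁻¹'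
      (univ.pi fun i => Ico (k i * δ) (k i * δ + δ)) := by
  ext x
  simp only [sobCell, mem_ofPred_eq, mem_preimage, mem_univ_pi, mem_Ico]
  refine forall_congr' fun i => ?_
  rw [Int.floor_eq_iff, le_div_iff₀ hδ, div_lt_iff₀ hδ, add_mul, one_mul]

theorem sobCell_meas (N : ℕ) {δ : ℝ} (hδ : 0 < δ) (k : Fin N → ℤ) :
    MeasurableSet (sobCell N δ k) := by
  rw [sobCell_eq N hδ]
  exact (MeasurableSet.univ_pi fun i => measurableSet_Ico).preimage
    (PiLp.volume_preserving_ofLp (Fin N)).measurable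

theorem sobCell_vol (N : ℕ) {δ : ℝ} (hδ : 0 < δ) (k : Fin N → ℤ) :
    volume (sobCell N δ k) = ENNReal.ofReal δ ^ N := by
  rw [sobCell_eq N hδ, (PiLp.volume_preserving_ofLp (Fin N)).measure_preimage
    (MeasurableSet.univ_pi fun i => measurableSet_Ico).nullMeasurableSet, Real.volume_pi_Ico]
  simp

def sobDiff (N : ℕ) (δ : ℝ) : Set (EucN N) :=
  (@WithLp.ofLp 2 (Fin N → ℝ)) ⁻¹' (univ.pi fun _ => Ioo (-δ) δ)

theorem sobDiff_meas (N : ℕ) (δ : ℝ) : MeasurableSet (sobDiff N δ) :=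
  (MeasurableSet.univ_pi fun i => measurableSet_Ioo).preimage
    (PiLp.volume_preserving_ofLp (Fin N)).measurable

theorem sobDiff_vol (N : ℕ) (δ : ℝ) :
    volume (sobDiff N δ) = 2 ^ N * ENNReal.ofReal δ ^ N := by
  rw [sobDiff, (PiLp.volume_preserving_ofLp (Fin N)).measure_preimage
    (MeasurableSet.univ_pi fun i => measurableSet_Ioo).nullMeasurableSet, Real.volume_pi_Ioo]
  have : δ - -δ = 2 * δ := by ring
  simp [this, ENNReal.ofReal_mul, mul_pow]

theorem sobDiff_norm {N : ℕ} {δ : ℝ} {h : EucN N} (hh : h ∈ sobDiff N δ) :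
    ‖h‖ₑ ≤ ENNReal.ofReal (N * δ) := by
  simp only [sobDiff, mem_preimage, mem_univ_pi, mem_Ioo] at hh
  rw [← ofReal_norm]
  apply ENNReal.ofReal_le_ofReal
  have h1 : h = ∑ i, EuclideanSpace.single i (h i) := by
    ext j
    simp
  calc ‖h‖ ≤ ∑ i, ‖EuclideanSpace.single i (h i)‖ := by
        conv_lhs => rw [h1]
        exact norm_sum_le _ _
    _ ≤ ∑ i : Fin N, δ := by
        apply Finset.sum_le_sum
        intro i _
        rw [EuclideanSpace.norm_single, Real.norm_eq_abs]
        exact (abs_lt.2 (hh i)).le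
    _ = _ := by simp

theorem sobCell_sub {N : ℕ} {δ : ℝ} (hδ : 0 < δ) {k : Fin N → ℤ} {x y : EucN N}
    (hx : x ∈ sobCell N δ k) (hy : y ∈ sobCell N δ k) : y - x ∈ sobDiff N δ := by
  rw [sobCell_eq N hδ] at hx hy
  simp only [sobDiff, mem_preimage, mem_univ_pi, mem_Ioo, mem_Ico] at *
  intro i
  have := hx i; have := hy i
  simp only [PiLp.sub_apply]
  constructor <;> linarith

theorem sobCell_disj (N : ℕ) (δ : ℝ) (I : Set (Fin N → ℤ)) :
    I.PairwiseDisjoint (sobCell N δ) := by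
  intro k _ l _ hkl
  rw [Function.onFun, Set.disjoint_left]
  intro x hx hy
  exact hkl (funext fun i => (hx i).symm.trans (hy i))

theorem sobCell_cover (N : ℕ) {δ : ℝ} (hδ : 0 < δ) (ρ : ℝ) :
    ∃ I : Finset (Fin N → ℤ), ball (0 : EucN N) ρ ⊆ ⋃ k ∈ I, sobCell N δ k := by
  refine ⟨Fintype.piFinset fun _ => Finset.Icc ⌊-ρ / δ⌋ ⌊ρ / δ⌋, fun x hx => ?_⟩
  simp only [mem_iUnion, Fintype.mem_piFinset, Finset.mem_Icc]
  refine ⟨fun i => ⌊x i / δ⌋, fun i => ?_, fun i => rfl⟩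
  have h1 : |x i| ≤ ρ := by
    have := PiLp.norm_apply_le x i
    rw [mem_ball_zero_iff] at hx
    rw [Real.norm_eq_abs] at this
    linarith
  have := abs_le.1 h1
  constructor <;> apply Int.floor_le_floor <;> gcongr <;> linarith

theorem cell_avg_bound {N : ℕ} {δ : ℝ} (hδ : 0 < δ) {f : EucN N → ℝ} (hf : Continuous f)
    {p : ℝ} (hp : 1 < p) (k : Fin N → ℤ) :
    ‖∫ y, f y ∂((ENNReal.ofReal δ ^ N)⁻¹ • volume.restrict (sobCell N δ k))‖ₑ ^ p ≤
      (ENNReal.ofReal δ ^ N)⁻¹ * ∫⁻ y in sobCell N δ k, ‖f y‖ₑ ^ p := by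
  have hm0 : ENNReal.ofReal δ ^ N ≠ 0 := by simp [hδ]
  have hmt : ENNReal.ofReal δ ^ N ≠ ⊤ := by simp
  have : IsProbabilityMeasure ((ENNReal.ofReal δ ^ N)⁻¹ • volume.restrict (sobCell N δ k)) :=
    ⟨by simp [sobCell_vol N hδ, ENNReal.inv_mul_cancel hm0 hmt]⟩
  calc _ ≤ (∫⁻ y, ‖f y‖ₑ ∂((ENNReal.ofReal δ ^ N)⁻¹ • volume.restrict (sobCell N δ k))) ^ p := by
        gcongr; exact enorm_integral_le_lintegral_enorm _
    _ ≤ ∫⁻ y, ‖f y‖ₑ ^ p ∂((ENNReal.ofReal δ ^ N)⁻¹ • volume.restrict (sobCell N δ k)) :=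
        jensen_lint _ _ hf.enorm.measurable.aemeasurable hp
    _ = _ := by rw [lintegral_smul_measure, smul_eq_mul]

def cellAvg (N : ℕ) (δ : ℝ) (f : EucN N → ℝ) (k : Fin N → ℤ) : ℝ :=
  ∫ y, f y ∂((ENNReal.ofReal δ ^ N)⁻¹ • volume.restrict (sobCell N δ k))

theorem cell_osc {N : ℕ} {δ : ℝ} (hδ : 0 < δ) {ψ : EucN N → ℝ} (hψ : ContDiff ℝ (⊤ : ℕ∞) ψ)
    (hs : HasCompactSupport ψ) {p : ℝ} (hp : 1 < p) (I : Finset (Fin N → ℤ)) :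
    ∑ k ∈ I, ∫⁻ x in sobCell N δ k, ‖ψ x - cellAvg N δ ψ k‖ₑ ^ p ≤
      2 ^ N * ENNReal.ofReal (N * δ) ^ p * ∫⁻ x, ‖gradient ψ x‖ₑ ^ p := by
  have hm0 : ENNReal.ofReal δ ^ N ≠ 0 := by simp [hδ]
  have hmt : ENNReal.ofReal δ ^ N ≠ ⊤ := by simp
  have hcψ := hψ.continuous
  have hmeas : Measurable (fun z : EucN N × EucN N => ‖ψ (z.1 + z.2) - ψ z.1‖ₑ ^ p) := by
    have : Continuous (fun z : EucN N × EucN N => ψ (z.1 + z.2) - ψ z.1) := by fun_prop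
    exact this.enorm.measurable.pow_const p
  have h1 : ∀ k, ∫⁻ x in sobCell N δ k, ‖ψ x - cellAvg N δ ψ k‖ₑ ^ p ≤
      ∫⁻ x in sobCell N δ k, (ENNReal.ofReal δ ^ N)⁻¹ *
        ∫⁻ h in sobDiff N δ, ‖ψ (x + h) - ψ x‖ₑ ^ p := by
    intro k
    refine setLIntegral_mono' (sobCell_meas N hδ k) fun x hx => ?_
    have e1 : cellAvg N δ ψ k - ψ x =
        ∫ y, (ψ y - ψ x) ∂((ENNReal.ofReal δ ^ N)⁻¹ • volume.restrict (sobCell N δ k)) := by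
      have : IsProbabilityMeasure
          ((ENNReal.ofReal δ ^ N)⁻¹ • volume.restrict (sobCell N δ k)) :=
        ⟨by simp [sobCell_vol N hδ, ENNReal.inv_mul_cancel hm0 hmt]⟩
      rw [integral_sub _ (integrable_const _)]
      · simp [cellAvg]
      · exact ((hcψ.integrable_of_hasCompactSupport hs).restrict).smul_measure (by simp [hδ])
    rw [← enorm_neg, neg_sub, e1]
    refine (cell_avg_bound hδ (f := fun y => ψ y - ψ x) (by fun_prop) hp k).trans ?_
    gcongr _ * ?_
    rw [← lintegral_indicator (sobCell_meas N hδ k), ← lintegral_indicator (sobDiff_meas N δ),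
      ← lintegral_add_left_eq_self _ x]
    refine lintegral_mono fun h => ?_
    by_cases hh : x + h ∈ sobCell N δ k
    · have : h ∈ sobDiff N δ := by simpa using sobCell_sub hδ hx hh
      simp [hh, this]
    · simp [hh]
  calc _ ≤ ∑ k ∈ I, ∫⁻ x in sobCell N δ k, (ENNReal.ofReal δ ^ N)⁻¹ *
        ∫⁻ h in sobDiff N δ, ‖ψ (x + h) - ψ x‖ₑ ^ p := Finset.sum_le_sum fun k _ => h1 k
    _ = ∫⁻ x in ⋃ k ∈ I, sobCell N δ k, (ENNReal.ofReal δ ^ N)⁻¹ *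
        ∫⁻ h in sobDiff N δ, ‖ψ (x + h) - ψ x‖ₑ ^ p :=
        (lintegral_biUnion_finset (sobCell_disj N δ _) (fun k _ => sobCell_meas N hδ k) _).symm
    _ ≤ ∫⁻ x, (ENNReal.ofReal δ ^ N)⁻¹ *
        ∫⁻ h in sobDiff N δ, ‖ψ (x + h) - ψ x‖ₑ ^ p := setLIntegral_le_lintegral _ _
    _ = (ENNReal.ofReal δ ^ N)⁻¹ * ∫⁻ x, ∫⁻ h in sobDiff N δ, ‖ψ (x + h) - ψ x‖ₑ ^ p :=
        lintegral_const_mul _ hmeas.lintegral_prod_right'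
    _ = (ENNReal.ofReal δ ^ N)⁻¹ * ∫⁻ h in sobDiff N δ, ∫⁻ x, ‖ψ (x + h) - ψ x‖ₑ ^ p := by
        rw [lintegral_lintegral_swap hmeas.aemeasurable]
    _ ≤ (ENNReal.ofReal δ ^ N)⁻¹ * ∫⁻ _h in sobDiff N δ, ENNReal.ofReal (N * δ) ^ p *
          ∫⁻ x, ‖gradient ψ x‖ₑ ^ p := by
        gcongr 1
        refine setLIntegral_mono' (sobDiff_meas N δ) fun h hh => ?_
        refine (trans_est hψ hp h).trans ?_
        gcongr
        exact sobDiff_norm hh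
    _ = _ := by
        rw [setLIntegral_const, sobDiff_vol]
        calc _ = ((ENNReal.ofReal δ ^ N)⁻¹ * ENNReal.ofReal δ ^ N) * (2 ^ N *
              ENNReal.ofReal (N * δ) ^ p * ∫⁻ x, ‖gradient ψ x‖ₑ ^ p) := by ring
          _ = _ := by rw [ENNReal.inv_mul_cancel hm0 hmt, one_mul]

theorem testFun_memLp {N : ℕ} {Ω : Set (EucN N)} {ψ : EucN N → ℝ} (h : IsTestFun Ω ψ)
    (q : ℝ≥0∞) : MemLp ψ q volume := h.1.continuous.memLp_of_hasCompactSupport h.2.1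

theorem testFun_grad_memLp {N : ℕ} {Ω : Set (EucN N)} {ψ : EucN N → ℝ} (h : IsTestFun Ω ψ)
    (q : ℝ≥0∞) : MemLp (fun x => gradient ψ x) q volume := by
  refine (continuous_gradient h.1).memLp_of_hasCompactSupport ?_
  exact (h.2.1.fderiv ℝ).comp_left (map_zero _)

theorem lint_eq_ofReal {N : ℕ} {E : Type*} [NormedAddCommGroup E] {p : ℝ} (hp : 1 < p)
    {f : EucN N → E} (hf : MemLp f (ENNReal.ofReal p) volume) :
    ∫⁻ x, ‖f x‖ₑ ^ p = ENNReal.ofReal (∫ x, ‖f x‖ ^ p) := by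
  have h := hf.integrable_norm_rpow (by simp; linarith) (by simp)
  rw [ENNReal.toReal_ofReal (by linarith)] at h
  rw [ofReal_integral_eq_lintegral_ofReal h (ae_of_all _ fun x => by positivity)]
  congr 1; ext x
  rw [← ENNReal.ofReal_rpow_of_nonneg (norm_nonneg _) (by linarith), ofReal_norm]

theorem testFun_const_mul {N : ℕ} {Ω : Set (EucN N)} {ψ : EucN N → ℝ} (h : IsTestFun Ω ψ)
    (c : ℝ) : IsTestFun Ω (fun x => c * ψ x) :=
  ⟨contDiff_const.mul h.1, h.2.1.mul_left, (tsupport_mul_subset_right).trans h.2.2⟩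

theorem poincare_test {N : ℕ} {p : ℝ} (hp : 1 < p) {Ω : Set (EucN N)} {ψ : EucN N → ℝ}
    (h : IsTestFun Ω ψ) :
    lambda1p N p hp.le Ω * ∫⁻ x, ‖ψ x‖ₑ ^ p ≤ ∫⁻ x, ‖gradient ψ x‖ₑ ^ p := by
  have hp0 : 0 < p := by linarith
  rw [lint_eq_ofReal hp (testFun_memLp h _)]
  by_cases hz : ∫ x, ‖ψ x‖ ^ p = 0
  · rw [hz]; simp
  have hA : 0 < ∫ x, ‖ψ x‖ ^ p := lt_of_le_of_ne (by positivity) (Ne.symm hz)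
  set A := ∫ x, ‖ψ x‖ ^ p with hAdef
  set c : ℝ := A ^ (-(1 / p)) with hc
  have hc0 : 0 < c := by positivity
  have hcp : c ^ p = A⁻¹ := by
    rw [hc, ← Real.rpow_mul hA.le]
    rw [show -(1 / p) * p = -1 by field_simp, Real.rpow_neg_one]
  have hφ := testFun_const_mul h c
  have hg : ∀ x, gradient (fun x => c * ψ x) x = c • gradient ψ x := by
    intro x
    simp only [gradient]
    rw [fderiv_const_mul (h.1.differentiable (by simp) x)]
    simp
  have m1 := testFun_memLp hφ (ENNReal.ofReal p)
  have m2 := testFun_grad_memLp hφ (ENNReal.ofReal p)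
  let w : SobPair N (ENNReal.ofReal p) := (m1.toLp _, m2.toLp _)
  have hw1 := m1.coeFn_toLp
  have hw2 := m2.coeFn_toLp
  have hle : lambda1p N p hp.le Ω ≤ ENNReal.ofReal (∫ x, ‖w.2 x‖ ^ p) := by
    apply sInf_le
    refine ⟨w, ?_, ?_, rfl⟩
    · have := fact_one_le_ofReal hp.le
      exact subset_closure ⟨_, hφ, hw1, hw2⟩
    · calc _ = ∫ x, c ^ p * ‖ψ x‖ ^ p := by
            apply integral_congr_ae
            filter_upwards [hw1] with x hx
            change |(m1.toLp _ : EucN N → ℝ) x| ^ p = _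
            rw [hx, abs_mul, abs_of_pos hc0, Real.mul_rpow hc0.le (abs_nonneg _),
              Real.norm_eq_abs]
        _ = 1 := by rw [integral_const_mul, hcp, ← hAdef, inv_mul_cancel₀ hz]
  have h2 : ENNReal.ofReal (∫ x, ‖w.2 x‖ ^ p) = ENNReal.ofReal A⁻¹ *
      ∫⁻ x, ‖gradient ψ x‖ₑ ^ p := by
    rw [lint_eq_ofReal hp (testFun_grad_memLp h _), ← ENNReal.ofReal_mul (by positivity)]
    congr 1
    rw [← integral_const_mul]
    apply integral_congr_ae
    filter_upwards [hw2] with x hx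
    change ‖(m2.toLp _ : EucN N → EucN N) x‖ ^ p = _
    rw [hx, hg, norm_smul, Real.norm_eq_abs, abs_of_pos hc0,
      Real.mul_rpow hc0.le (norm_nonneg _), hcp]
  calc _ ≤ (ENNReal.ofReal A⁻¹ * ∫⁻ x, ‖gradient ψ x‖ₑ ^ p) * ENNReal.ofReal A := by
        gcongr; exact hle.trans h2.le
    _ = (ENNReal.ofReal A⁻¹ * ENNReal.ofReal A) * ∫⁻ x, ‖gradient ψ x‖ₑ ^ p := by ring
    _ = _ := by
        rw [← ENNReal.ofReal_mul (by positivity), inv_mul_cancel₀ hz]; simp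

theorem exists_cutoff (N : ℕ) : ∃ C : ℝ, ∀ r : ℝ, 1 ≤ r → ∃ η : EucN N → ℝ,
    ContDiff ℝ (⊤ : ℕ∞) η ∧ (∀ x, 0 ≤ η x ∧ η x ≤ 1) ∧ tsupport η ⊆ (ball 0 r)ᶜ ∧
    (∀ x, x ∉ ball (0 : EucN N) (2 * r) → η x = 1) ∧ ∀ x, ‖fderiv ℝ η x‖ ≤ C := by
  let χ : ContDiffBump (0 : EucN N) := ⟨1, 2, one_pos, one_lt_two⟩
  have hχ : ContDiff ℝ (⊤ : ℕ∞) χ := χ.contDiff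
  obtain ⟨C, hC⟩ := (hχ.continuous_fderiv (by simp)).bounded_above_of_compact_support
    (χ.hasCompactSupport.fderiv ℝ)
  refine ⟨C, fun r hr => ?_⟩
  have hr0 : 0 < r := by linarith
  refine ⟨fun x => 1 - χ (r⁻¹ • x), ?_, ?_, ?_, ?_, ?_⟩
  · exact contDiff_const.sub (hχ.comp (contDiff_const_smul _))
  · exact fun x => ⟨by linarith [χ.le_one (x := r⁻¹ • x)], by linarith [χ.nonneg (x := r⁻¹ • x)]⟩
  · apply closure_minimal _ isOpen_ball.isClosed_compl
    intro x hx hxr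
    apply hx
    have : χ (r⁻¹ • x) = 1 := by
      apply χ.one_of_mem_closedBall
      rw [mem_closedBall_zero_iff, norm_smul, norm_inv, Real.norm_of_nonneg hr0.le]
      rw [mem_ball_zero_iff] at hxr
      change r⁻¹ * ‖x‖ ≤ 1
      rw [inv_mul_le_iff₀ hr0]; linarith
    simp [this]
  · intro x hx
    have : χ (r⁻¹ • x) = 0 := by
      apply χ.zero_of_le_dist
      rw [dist_zero_right, norm_smul, norm_inv, Real.norm_of_nonneg hr0.le]
      rw [mem_ball_zero_iff, not_lt] at hx
      change 2 ≤ r⁻¹ * ‖x‖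
      rw [le_inv_mul_iff₀ hr0]; linarith
    simp [this]
  · intro x
    have hd : HasFDerivAt (fun x => 1 - χ (r⁻¹ • x))
        (-((fderiv ℝ χ (r⁻¹ • x)).comp (r⁻¹ • ContinuousLinearMap.id ℝ (EucN N)))) x := by
      have h1 : HasFDerivAt (fun x : EucN N => r⁻¹ • x)
        (r⁻¹ • ContinuousLinearMap.id ℝ (EucN N)) x := (hasFDerivAt_id x).const_smul r⁻¹
      have h2 := ((hχ.differentiable (by simp)) (r⁻¹ • x)).hasFDerivAt
      exact (h2.comp x h1).const_sub 1
    rw [hd.fderiv, norm_neg, ContinuousLinearMap.comp_smul, ContinuousLinearMap.comp_id, norm_smul,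
      norm_inv, Real.norm_of_nonneg hr0.le]
    calc _ ≤ 1 * ‖fderiv ℝ χ (r⁻¹ • x)‖ := by
          gcongr; exact inv_le_one_of_one_le₀ hr
      _ ≤ C := by rw [one_mul]; exact hC _

theorem tail_est (N : ℕ) {p : ℝ} (hp : 1 < p) : ∃ C : ℝ≥0∞, C ≠ ⊤ ∧
    ∀ (Ω : Set (EucN N)) (ψ : EucN N → ℝ) (R : ℝ), IsTestFun Ω ψ → 0 < R →
      lambda1p N p hp.le (Ω \ closure (ball (0 : EucN N) R)) *
        ∫⁻ x in (ball 0 (2 * (R + 1)))ᶜ, ‖ψ x‖ₑ ^ p ≤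
      C * ((∫⁻ x, ‖gradient ψ x‖ₑ ^ p) + ∫⁻ x, ‖ψ x‖ₑ ^ p) := by
  have hp0 : 0 < p := by linarith
  obtain ⟨C, hC⟩ := exists_cutoff N
  set D : ℝ≥0∞ := max 1 (ENNReal.ofReal C ^ p) with hD
  have hDt : D ≠ ⊤ := by simp [hD, hp0.le]
  refine ⟨2 ^ (p - 1) * D, ENNReal.mul_ne_top (by simp) hDt, ?_⟩
  intro Ω ψ R hψ hR
  obtain ⟨η, hη, hη01, hηs, hη1, hηd⟩ := hC (R + 1) (by linarith)
  have hφ : IsTestFun (Ω \ closure (ball (0 : EucN N) R)) (fun x => η x * ψ x) := by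
    refine ⟨hη.mul hψ.1, hψ.2.1.mul_left, fun x hx => ⟨?_, fun hx2 => ?_⟩⟩
    · exact hψ.2.2 (tsupport_mul_subset_right hx)
    · have h1 := hηs (tsupport_mul_subset_left hx)
      apply h1
      have h2 := closure_ball_subset_closedBall hx2
      rw [mem_closedBall_zero_iff] at h2
      rw [mem_ball_zero_iff]; linarith
  have hmψ : Measurable (fun x => ‖ψ x‖ₑ ^ p) := hψ.1.continuous.enorm.measurable.pow_const p
  have hmg : Measurable (fun x => ‖gradient ψ x‖ₑ ^ p) :=
    (continuous_gradient hψ.1).enorm.measurable.pow_const p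
  calc _ ≤ lambda1p N p hp.le (Ω \ closure (ball (0 : EucN N) R)) *
        ∫⁻ x, ‖η x * ψ x‖ₑ ^ p := by
        gcongr _ * ?_
        rw [← lintegral_indicator isOpen_ball.measurableSet.compl]
        refine lintegral_mono fun x => ?_
        by_cases hx : x ∈ (ball (0 : EucN N) (2 * (R + 1)))ᶜ
        · rw [indicator_of_mem hx]
          dsimp only
          rw [hη1 x hx, one_mul]
        · rw [indicator_of_notMem hx]; exact zero_le
    _ ≤ ∫⁻ x, ‖gradient (fun x => η x * ψ x) x‖ₑ ^ p := poincare_test hp hφ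
    _ ≤ ∫⁻ x, 2 ^ (p - 1) * D * (‖gradient ψ x‖ₑ ^ p + ‖ψ x‖ₑ ^ p) := by
        refine lintegral_mono fun x => ?_
        have h1 : ‖gradient (fun x => η x * ψ x) x‖ₑ ≤
            ‖gradient ψ x‖ₑ + ENNReal.ofReal C * ‖ψ x‖ₑ := by
          rw [norm_gradient_eq, norm_gradient_eq,
            fderiv_fun_mul (hη.differentiable (by simp) x) (hψ.1.differentiable (by simp) x)]
          have hadd : ∀ a b : EucN N →L[ℝ] ℝ, ‖a + b‖ₑ ≤ ‖a‖ₑ + ‖b‖ₑ := fun a b => by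
            rw [← ofReal_norm, ← ofReal_norm, ← ofReal_norm,
              ← ENNReal.ofReal_add (norm_nonneg _) (norm_nonneg _)]
            exact ENNReal.ofReal_le_ofReal (norm_add_le a b)
          refine (hadd _ _).trans ?_
          rw [enorm_smul, enorm_smul, mul_comm ‖ψ x‖ₑ]
          gcongr
          · calc _ ≤ 1 * ‖fderiv ℝ ψ x‖ₑ := by
                  gcongr
                  rw [← ofReal_norm, Real.norm_of_nonneg (hη01 x).1]
                  simpa using (hη01 x).2
              _ = _ := one_mul _
          · rw [← ofReal_norm]
            exact ENNReal.ofReal_le_ofReal (hηd x)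
        calc _ ≤ (‖gradient ψ x‖ₑ + ENNReal.ofReal C * ‖ψ x‖ₑ) ^ p := by gcongr
          _ ≤ 2 ^ (p - 1) * (‖gradient ψ x‖ₑ ^ p + (ENNReal.ofReal C * ‖ψ x‖ₑ) ^ p) :=
              ENNReal.rpow_add_le_mul_rpow_add_rpow _ _ hp.le
          _ ≤ 2 ^ (p - 1) * (D * ‖gradient ψ x‖ₑ ^ p + D * ‖ψ x‖ₑ ^ p) := by
              rw [ENNReal.mul_rpow_of_nonneg _ _ hp0.le]
              gcongr
              · exact le_mul_of_one_le_left zero_le (le_max_left _ _)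
              · exact le_max_right _ _
          _ = _ := by ring
    _ = _ := by
        rw [lintegral_const_mul _ (by exact hmg.add hmψ), lintegral_add_left hmg]

theorem lp_finset_sum {N : ℕ} {q : ℝ≥0∞} {ι : Type*} (I : Finset ι)
    (f : ι → Lp ℝ q (volume : Measure (EucN N))) :
    ⇑(∑ k ∈ I, f k) =ᵐ[volume] fun x => ∑ k ∈ I, f k x := by
  classical
  induction I using Finset.induction_on with
  | empty =>
    simp only [Finset.sum_empty]
    exact Lp.coeFn_zero ℝ q (volume : Measure (EucN N))
  | insert a s ha ih =>
    rw [Finset.sum_insert ha]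
    filter_upwards [Lp.coeFn_add (f a) (∑ k ∈ s, f k), ih] with x h1 h2
    rw [h1, Pi.add_apply, h2, Finset.sum_insert ha]

/-- Step functions with bounded coefficients: a compact subset of `L^p`. -/
theorem step_compact {N : ℕ} {q : ℝ≥0∞} [Fact (1 ≤ q)] {δ : ℝ} (hδ : 0 < δ)
    (I : Finset (Fin N → ℤ)) (A : ℝ) :
    ∃ T : Set (Lp ℝ q (volume : Measure (EucN N))), IsCompact T ∧
      ∀ a : (Fin N → ℤ) → ℝ, (∀ k, |a k| ≤ A) → ∃ v ∈ T, ⇑v =ᵐ[volume]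
        fun x => ∑ k ∈ I, (sobCell N δ k).indicator (fun _ => a k) x := by
  have hfin : ∀ k, volume (sobCell N δ k) ≠ ⊤ := fun k => by simp [sobCell_vol N hδ]
  let e : (Fin N → ℤ) → Lp ℝ q (volume : Measure (EucN N)) := fun k =>
    indicatorConstLp q (sobCell_meas N hδ k) (hfin k) (1 : ℝ)
  let Φ : ((Fin N → ℤ) → ℝ) → Lp ℝ q (volume : Measure (EucN N)) := fun a => ∑ k ∈ I, a k • e k
  have hΦ : Continuous Φ := by
    refine continuous_finsetSum _ fun k _ => ?_
    exact (continuous_apply k).smul continuous_const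
  refine ⟨Φ '' (univ.pi fun _ => Icc (-A) A), (isCompact_univ_pi fun _ => isCompact_Icc).image hΦ,
    fun a ha => ⟨Φ a, ⟨a, fun k _ => abs_le.1 (ha k), rfl⟩, ?_⟩⟩
  have h1 : ∀ᵐ x, ∀ k ∈ I, (a k • e k : Lp ℝ q (volume : Measure (EucN N))) x =
      (sobCell N δ k).indicator (fun _ => a k) x := by
    rw [Finset.eventually_all]
    intro k _
    filter_upwards [Lp.coeFn_smul (a k) (e k),
      indicatorConstLp_coeFn (p := q) (hs := sobCell_meas N hδ k) (hμs := hfin k) (c := (1:ℝ))]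
      with x h1 h2
    rw [h1, Pi.smul_apply, h2]
    by_cases hx : x ∈ sobCell N δ k <;> simp [hx]
  filter_upwards [lp_finset_sum I fun k => a k • e k, h1] with x h2 h3
  rw [h2]
  exact Finset.sum_congr rfl h3

theorem eLpNorm_eq' {N : ℕ} {E : Type*} [NormedAddCommGroup E] {p : ℝ} (hp : 1 < p)
    (f : EucN N → E) (μ : Measure (EucN N)) :
    eLpNorm f (ENNReal.ofReal p) μ = (∫⁻ x, ‖f x‖ₑ ^ p ∂μ) ^ (1 / p) := by
  rw [eLpNorm_eq_lintegral_rpow_enorm_toReal (by simp; linarith) (by simp),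
    ENNReal.toReal_ofReal (by linarith)]

theorem rpow_one_div_le_iff' {x y : ℝ≥0∞} {p : ℝ} (hp : 0 < p) :
    x ^ (1 / p) ≤ y ↔ x ≤ y ^ p := by
  rw [one_div, ENNReal.rpow_inv_le_iff hp]

theorem approx_compact {N : ℕ} {p : ℝ} (hp : 1 < p) [Fact (1 ≤ ENNReal.ofReal p)]
    {Ω : Set (EucN N)} (hE : Einfty N p hp.le Ω = ⊤) {M : ℝ≥0∞} (hM : M ≠ ⊤) {ε : ℝ≥0∞}
    (hε : 0 < ε) :
    ∃ T : Set (Lp ℝ (ENNReal.ofReal p) (volume : Measure (EucN N))), IsCompact T ∧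
      ∀ w : SobPair N (ENNReal.ofReal p), IsTestPair (ENNReal.ofReal p) Ω w →
        eLpNorm (⇑w.1) (ENNReal.ofReal p) volume ≤ M →
        eLpNorm (⇑w.2) (ENNReal.ofReal p) volume ≤ M → ∃ v ∈ T, edist w.1 v ≤ ε := by
  have hp0 : 0 < p := by linarith
  obtain ⟨C, hCt, hC⟩ := tail_est N hp
  set e : ℝ≥0∞ := ε ^ p / 2 with he
  have he0 : 0 < e := by
    rw [he]
    exact ENNReal.div_pos (ENNReal.rpow_pos_of_nonneg hε hp0.le).ne' (by simp)
  set M' : ℝ≥0∞ := M ^ p with hM'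
  have hMfin : M' ≠ ⊤ := ENNReal.rpow_ne_top_of_nonneg hp0.le hM
  set B : ℝ≥0∞ := C * (M' + M') with hB
  have hBt : B ≠ ⊤ := ENNReal.mul_ne_top hCt (by simp [hMfin])
  have hL : B / e < Einfty N p hp.le Ω := by
    rw [hE]; exact (ENNReal.div_lt_top hBt he0.ne')
  obtain ⟨R, hR⟩ := lt_iSup_iff.1 hL
  obtain ⟨hR0, hR⟩ := lt_iSup_iff.1 hR
  rw [ENNReal.div_lt_iff (Or.inl he0.ne') (Or.inr hBt)] at hR
  obtain ⟨δ, hδe, hδ⟩ : ∃ δ : ℝ, 2 ^ N * ENNReal.ofReal (N * δ) ^ p * M' < e ∧ 0 < δ := by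
    have hc : Continuous (fun δ : ℝ => 2 ^ N * ENNReal.ofReal (N * δ) ^ p * M') := by
      have h1 : Continuous (fun δ : ℝ => ENNReal.ofReal (N * δ) ^ p) :=
        ENNReal.continuous_rpow_const.comp (ENNReal.continuous_ofReal.comp (by fun_prop))
      exact (ENNReal.continuous_mul_const hMfin).comp
        ((ENNReal.continuous_const_mul (by simp)).comp h1)
    have ht := hc.tendsto 0
    simp only [mul_zero, ENNReal.ofReal_zero, ENNReal.zero_rpow_of_pos hp0, zero_mul] at ht
    have h1 := (ht.mono_left (nhdsWithin_le_nhds (s := Ioi (0:ℝ)))).eventually_lt_const he0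
    exact (h1.and (self_mem_nhdsWithin (s := Ioi (0:ℝ)))).exists
  obtain ⟨I, hI⟩ := sobCell_cover N hδ (2 * (R + 1))
  set A' : ℝ≥0∞ := ((ENNReal.ofReal δ ^ N)⁻¹ * M') ^ (1 / p) with hA'
  have hAfin : A' ≠ ⊤ := by
    refine ENNReal.rpow_ne_top_of_nonneg (by positivity) (ENNReal.mul_ne_top ?_ hMfin)
    simp [hδ]
  obtain ⟨T, hT, hTa⟩ := step_compact (q := ENNReal.ofReal p) hδ I A'.toReal
  refine ⟨T, hT, fun w hw h1 h2 => ?_⟩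
  obtain ⟨ψ, hψ, hw1, hw2⟩ := hw
  rw [eLpNorm_congr_ae hw1, eLpNorm_eq' hp, rpow_one_div_le_iff' hp0] at h1
  rw [eLpNorm_congr_ae hw2, eLpNorm_eq' hp, rpow_one_div_le_iff' hp0] at h2
  obtain ⟨v, hvT, hv⟩ := hTa (cellAvg N δ ψ) (fun k => by
    have h3 := cell_avg_bound hδ hψ.1.continuous hp k
    have h4 : ‖cellAvg N δ ψ k‖ₑ ≤ A' := by
      rw [hA', one_div, ENNReal.le_rpow_inv_iff hp0]
      refine h3.trans ?_
      gcongr _ * ?_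
      exact (setLIntegral_le_lintegral _ _).trans h1
    have h5 := ENNReal.toReal_mono hAfin h4
    simpa using h5)
  refine ⟨v, hvT, ?_⟩
  set s : EucN N → ℝ := fun x => ∑ k ∈ I, (sobCell N δ k).indicator
    (fun _ => cellAvg N δ ψ k) x with hs
  have hds : (⇑w.1 - ⇑v) =ᵐ[volume] fun x => ψ x - s x := by
    filter_upwards [hw1, hv] with x h1 h2
    rw [Pi.sub_apply, h1, h2]
  rw [Lp.edist_def, eLpNorm_congr_ae hds, eLpNorm_eq' hp, rpow_one_div_le_iff' hp0]
  set U : Set (EucN N) := ⋃ k ∈ I, sobCell N δ k with hU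
  have hUm : MeasurableSet U := Finset.measurableSet_biUnion _ fun k _ => sobCell_meas N hδ k
  rw [← lintegral_add_compl _ hUm, ← ENNReal.add_halves (ε ^ p)]
  gcongr ?_ + ?_
  · rw [hU, lintegral_biUnion_finset (sobCell_disj N δ _) (fun k _ => sobCell_meas N hδ k)]
    calc _ = ∑ k ∈ I, ∫⁻ x in sobCell N δ k, ‖ψ x - cellAvg N δ ψ k‖ₑ ^ p := by
          refine Finset.sum_congr rfl fun k hk => ?_
          refine setLIntegral_congr_fun (sobCell_meas N hδ k) fun x hx => ?_
          have : s x = cellAvg N δ ψ k := by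
            rw [hs]
            dsimp only
            rw [Finset.sum_eq_single_of_mem k hk]
            · simp [hx]
            · intro l hl hlk
              apply indicator_of_notMem
              exact fun hxl => (Set.disjoint_left.1
                (sobCell_disj N δ univ (mem_univ l) (mem_univ k) hlk)) hxl hx
          rw [this]
      _ ≤ 2 ^ N * ENNReal.ofReal (N * δ) ^ p * ∫⁻ x, ‖gradient ψ x‖ₑ ^ p :=
          cell_osc hδ hψ.1 hψ.2.1 hp I
      _ ≤ 2 ^ N * ENNReal.ofReal (N * δ) ^ p * M' := by gcongr
      _ ≤ _ := hδe.le
  · calc _ = ∫⁻ x in Uᶜ, ‖ψ x‖ₑ ^ p := by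
          refine setLIntegral_congr_fun hUm.compl fun x hx => ?_
          have : s x = 0 := by
            refine Finset.sum_eq_zero fun k hk => indicator_of_notMem (fun hxk => hx ?_) _
            rw [hU]
            simp only [mem_iUnion]
            exact ⟨k, hk, hxk⟩
          rw [this, sub_zero]
      _ ≤ ∫⁻ x in (ball 0 (2 * (R + 1)))ᶜ, ‖ψ x‖ₑ ^ p :=
          lintegral_mono_set (compl_subset_compl.2 hI)
      _ ≤ e := by
          by_contra! hcon
          have h3 := hC Ω ψ R hψ hR0
          have h4 : C * ((∫⁻ x, ‖gradient ψ x‖ₑ ^ p) + ∫⁻ x, ‖ψ x‖ₑ ^ p) ≤ B := by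
            rw [hB]; gcongr
          exact absurd (hR.trans_le ((mul_le_mul' le_rfl hcon.le).trans (h3.trans h4)))
            (lt_irrefl _)

theorem compact_of_E {N : ℕ} {p : ℝ} (hp : 1 < p) {Ω : Set (EucN N)}
    (hE : Einfty N p hp.le Ω = ⊤) : CompactSobolevEmbedding N p hp.le Ω := by
  have := fact_one_le_ofReal hp.le
  rintro w hw ⟨M, hM, hwM⟩
  have htb : TotallyBounded (range fun n => (w n).1) := by
    rw [EMetric.totallyBounded_iff]
    intro ε hε
    have hε4 : 0 < min 1 (ε / 4) := lt_min one_pos (ENNReal.div_pos hε.ne' (by simp))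
    by_cases hεt : ε = ⊤
    · refine ⟨{0}, finite_singleton _, ?_⟩
      rintro _ ⟨n, rfl⟩
      simp [hεt, Metric.mem_eball, edist_lt_top]
    obtain ⟨T, hT, hTa⟩ := approx_compact hp hE (M := M + 1) (by simp [hM]) hε4
    obtain ⟨t, htf, ht⟩ := EMetric.totallyBounded_iff.1 hT.totallyBounded (ε / 4)
      (ENNReal.div_pos hε.ne' (by simp))
    refine ⟨t, htf, ?_⟩
    rintro _ ⟨n, rfl⟩
    obtain ⟨w', hw', hd⟩ := EMetric.mem_closure_iff.1 (hw n) _ hε4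
    have hd1 : edist (w n).1 w'.1 < min 1 (ε / 4) := lt_of_le_of_lt (le_max_left _ _) hd
    have hd2 : edist (w n).2 w'.2 < min 1 (ε / 4) := lt_of_le_of_lt (le_max_right _ _) hd
    have b1 : eLpNorm (⇑w'.1) (ENNReal.ofReal p) volume ≤ M + 1 := by
      rw [← Lp.enorm_def]
      have h0 : w'.1 = (w n).1 + (w'.1 - (w n).1) := by abel
      have h1 : ‖w'.1‖ₑ ≤ ‖(w n).1‖ₑ + ‖w'.1 - (w n).1‖ₑ := by
        conv_lhs => rw [h0]
        exact enorm_add_le _ _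
      refine h1.trans (add_le_add ?_ ?_)
      · rw [Lp.enorm_def]; exact (hwM n).1
      · rw [← edist_eq_enorm_sub, edist_comm]; exact hd1.le.trans (min_le_left _ _)
    have b2 : eLpNorm (⇑w'.2) (ENNReal.ofReal p) volume ≤ M + 1 := by
      rw [← Lp.enorm_def]
      have h0 : w'.2 = (w n).2 + (w'.2 - (w n).2) := by abel
      have h1 : ‖w'.2‖ₑ ≤ ‖(w n).2‖ₑ + ‖w'.2 - (w n).2‖ₑ := by
        conv_lhs => rw [h0]
        exact enorm_add_le _ _
      refine h1.trans (add_le_add ?_ ?_)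
      · rw [Lp.enorm_def]; exact (hwM n).2
      · rw [← edist_eq_enorm_sub, edist_comm]; exact hd2.le.trans (min_le_left _ _)
    obtain ⟨v, hv, hwv⟩ := hTa w' hw' b1 b2
    have hv2 := ht hv
    simp only [mem_iUnion, Metric.mem_eball] at hv2 ⊢
    obtain ⟨y, hy, hvy⟩ := hv2
    refine ⟨y, hy, ?_⟩
    have hε4t : ε / 4 ≠ ⊤ := ENNReal.div_ne_top hεt (by simp)
    calc edist (w n).1 y ≤ edist (w n).1 w'.1 + edist w'.1 v + edist v y :=
          (edist_triangle _ v _).trans (add_le_add (edist_triangle _ _ _) le_rfl)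
      _ < ε / 4 + ε / 4 + ε / 4 := by
          refine ENNReal.add_lt_add_of_le_of_lt ?_
            (add_le_add (hd1.le.trans (min_le_right _ _)) (hwv.trans (min_le_right _ _))) hvy
          have h3 := (hd1.trans_le (min_le_left _ _)).trans ENNReal.one_lt_top
          have h4 := (hwv.trans (min_le_left _ _)).trans_lt ENNReal.one_lt_top
          exact ENNReal.add_ne_top.2 ⟨h3.ne, h4.ne⟩
      _ ≤ ε / 4 + ε / 4 + (ε / 4 + ε / 4) := by
          gcongr; exact le_self_add
      _ = ε := by
          have h5 : ε / 4 + ε / 4 + (ε / 4 + ε / 4) = 4 * (ε / 4) := by ring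
          rw [h5, ENNReal.mul_div_cancel (by simp) (by simp)]
  have hcomp : IsCompact (closure (range fun n => (w n).1)) :=
    htb.closure.isCompact_of_isClosed isClosed_closure
  obtain ⟨u, -, σ, hσ, hlim⟩ := hcomp.tendsto_subseq (fun n => subset_closure (mem_range_self n))
  exact ⟨σ, hσ, u, Lp.memLp u, (Lp.tendsto_Lp_iff_tendsto_eLpNorm' _ _).1 hlim⟩

theorem vanish_ball {N : ℕ} {p : ℝ} (hp : 1 < p) {Ω : Set (EucN N)} {R : ℝ}
    {w : SobPair N (ENNReal.ofReal p)}
    (hw : w ∈ W10 N p hp.le (Ω \ closure (ball (0 : EucN N) R))) :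
    eLpNorm (⇑w.1) (ENNReal.ofReal p) (volume.restrict (ball 0 R)) = 0 := by
  have := fact_one_le_ofReal hp.le
  refine le_antisymm (le_of_forall_gt fun ε hε => ?_) zero_le
  obtain ⟨w', ⟨ψ, hψ, h1, -⟩, hd⟩ := EMetric.mem_closure_iff.1 hw ε hε
  have hd1 : edist w.1 w'.1 < ε := lt_of_le_of_lt (le_max_left _ _) hd
  refine lt_of_le_of_lt ?_ hd1
  rw [Lp.edist_def]
  refine le_trans (le_of_eq ?_) (eLpNorm_mono_measure _ (Measure.restrict_le_self (s := ball 0 R)))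
  apply eLpNorm_congr_ae
  filter_upwards [ae_restrict_of_ae h1, ae_restrict_mem isOpen_ball.measurableSet] with x hx hxB
  rw [Pi.sub_apply, hx]
  have : ψ x = 0 := by
    by_contra hne
    exact (hψ.2.2 (subset_tsupport _ hne)).2 (subset_closure hxB)
  rw [this, sub_zero]

theorem W10_mono {N : ℕ} {p : ℝ} (hp : 1 < p) {Ω Ω' : Set (EucN N)} (h : Ω ⊆ Ω') :
    W10 N p hp.le Ω ⊆ W10 N p hp.le Ω' := by
  have := fact_one_le_ofReal hp.le
  refine closure_mono ?_
  rintro w ⟨ψ, hψ, h1⟩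
  exact ⟨ψ, ⟨hψ.1, hψ.2.1, hψ.2.2.trans h⟩, h1⟩

theorem E_of_compact {N : ℕ} {p : ℝ} (hp : 1 < p) {Ω : Set (EucN N)}
    (hc : CompactSobolevEmbedding N p hp.le Ω) : Einfty N p hp.le Ω = ⊤ := by
  have hp0 : 0 < p := by linarith
  have hfact := fact_one_le_ofReal hp.le
  by_contra hE
  set K := Einfty N p hp.le Ω with hK
  have hex : ∀ n : ℕ, ∃ w ∈ W10 N p hp.le (Ω \ closure (ball (0 : EucN N) (n + 1 : ℝ))),
      (∫ x, |w.1 x| ^ p) = 1 ∧ ENNReal.ofReal (∫ x, ‖w.2 x‖ ^ p) < K + 1 := by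
    intro n
    have h1 : lambda1p N p hp.le (Ω \ closure (ball (0 : EucN N) (n + 1 : ℝ))) < K + 1 := by
      refine lt_of_le_of_lt ?_ (ENNReal.lt_add_right hE one_ne_zero)
      exact le_iSup₂_of_le (n + 1 : ℝ) (by simp; positivity) le_rfl
    obtain ⟨t, ⟨w, hw, hw1, rfl⟩, ht⟩ := sInf_lt_iff.1 h1
    exact ⟨w, hw, hw1, ht⟩
  choose w hw hw1 hw2 using hex
  have hn1 : ∀ n, eLpNorm (⇑(w n).1) (ENNReal.ofReal p) volume = 1 := by
    intro n
    have h2 := hw1 n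
    simp only [← Real.norm_eq_abs] at h2
    rw [eLpNorm_eq' hp, lint_eq_ofReal hp (Lp.memLp (w n).1), h2]
    simp
  have hn2 : ∀ n, eLpNorm (⇑(w n).2) (ENNReal.ofReal p) volume ≤ (K + 1) ^ (1 / p) := by
    intro n
    rw [eLpNorm_eq' hp, lint_eq_ofReal hp (Lp.memLp (w n).2)]
    gcongr
    exact (hw2 n).le
  obtain ⟨σ, hσ, u, hu, hlim⟩ := hc w (fun n => W10_mono hp diff_subset (hw n))
    ⟨max 1 ((K + 1) ^ (1 / p)), by
      simp only [ne_eq, max_eq_top, ENNReal.one_ne_top, false_or]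
      exact ENNReal.rpow_ne_top_of_nonneg (by positivity) (by simp [hE]),
      fun n => ⟨(hn1 n).le.trans (le_max_left _ _), (hn2 n).trans (le_max_right _ _)⟩⟩
  have hq0 : ENNReal.ofReal p ≠ 0 := by simp; linarith
  have hq1 : 1 ≤ ENNReal.ofReal p := hfact.out
  have hball : ∀ m : ℕ, u =ᵐ[volume.restrict (ball (0 : EucN N) m)] 0 := by
    intro m
    rw [← eLpNorm_eq_zero_iff hu.1.restrict hq0]
    refine le_antisymm (ge_of_tendsto hlim ?_) zero_le
    filter_upwards [eventually_ge_atTop m] with n hn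
    have hmn : (m : ℝ) ≤ (σ n : ℝ) + 1 := by
      have : m ≤ σ n := hn.trans (hσ.id_le n)
      have : (m : ℝ) ≤ σ n := by exact_mod_cast this
      linarith
    have hv := vanish_ball hp (hw (σ n))
    have hz : ⇑(w (σ n)).1 =ᵐ[volume.restrict (ball (0 : EucN N) m)] 0 := by
      rw [eLpNorm_eq_zero_iff (Lp.aestronglyMeasurable _).restrict hq0] at hv
      exact ae_restrict_of_ae_restrict_of_subset (ball_subset_ball hmn) hv
    calc eLpNorm u (ENNReal.ofReal p) (volume.restrict (ball (0 : EucN N) m))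
        = eLpNorm (⇑(w (σ n)).1 - u) (ENNReal.ofReal p)
            (volume.restrict (ball (0 : EucN N) m)) := by
          rw [← eLpNorm_neg]
          apply eLpNorm_congr_ae
          filter_upwards [hz] with x hx
          simp [hx]
      _ ≤ _ := eLpNorm_mono_measure _ Measure.restrict_le_self
  have hu0 : u =ᵐ[volume] 0 := by
    have h1 := (ae_restrict_iUnion_iff (fun m : ℕ => ball (0 : EucN N) m)
      (fun x => u x = (0 : EucN N → ℝ) x)).2 hball
    rw [iUnion_ball_nat, Measure.restrict_univ] at h1
    exact h1
  have hone : ∀ n, eLpNorm (⇑(w (σ n)).1 - u) (ENNReal.ofReal p) volume = 1 := by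
    intro n
    rw [← hn1 (σ n)]
    apply eLpNorm_congr_ae
    filter_upwards [hu0] with x hx
    simp [hx]
  simp only [hone] at hlim
  exact one_ne_zero (tendsto_nhds_unique tendsto_const_nhds hlim)

theorem statement6 (N : ℕ) (p : ℝ) (hp1 : 1 < p) (Ω : Set (EucN N)) (hΩ : IsOpen Ω) :
    CompactSobolevEmbedding N p hp1.le Ω ↔ Einfty N p hp1.le Ω = ⊤ :=
  ⟨E_of_compact hp1, compact_of_E hp1⟩

end
end

section
/- Let 1<p<∞, let Ω ⊆ ℝ^N be an open set, and let V ≥ 0 be a strongly confining potential. Then for every ζ ∈ C_c^∞(Ω) and every φ ∈ W^{1,p}_0(Ω) ∩ L^∞(Ω), the product ζφ belongs to W^{1,p}_0(Ω;V). -/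
open MeasureTheory Filter Topology Metric Set ENNReal
open scoped RealInnerProductSpace

noncomputable section

/-- Dominated convergence in `L^q`. -/
theorem aux_dct {α E : Type*} [MeasurableSpace α] {μ : Measure α} [NormedAddCommGroup E]
    {q : ℝ≥0∞} (hq0 : q ≠ 0) (hqt : q ≠ ⊤) (F : ℕ → α → E) (g : α → ℝ)
    (hF : ∀ n, AEStronglyMeasurable (F n) μ) (hg : MemLp g q μ)
    (hb : ∀ n, ∀ᵐ x ∂μ, ‖F n x‖ ≤ g x)
    (hlim : ∀ᵐ x ∂μ, Tendsto (fun n => F n x) atTop (𝓝 0)) :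
    Tendsto (fun n => eLpNorm (F n) q μ) atTop (𝓝 0) := by
  have hq : 0 < q.toReal := ENNReal.toReal_pos hq0 hqt
  simp_rw [eLpNorm_eq_lintegral_rpow_enorm_toReal hq0 hqt]
  have h1 : Tendsto (fun n => ∫⁻ x, ‖F n x‖ₑ ^ q.toReal ∂μ) atTop (𝓝 (∫⁻ _, 0 ∂μ)) := by
    refine tendsto_lintegral_of_dominated_convergence' (fun x => ‖g x‖ₑ ^ q.toReal)
      (fun n => (hF n).enorm.pow_const _) ?_ ?_ ?_
    · intro n
      filter_upwards [hb n] with x hx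
      refine ENNReal.rpow_le_rpow ?_ hq.le
      rw [enorm_le_iff_norm_le]
      exact hx.trans (le_abs_self _)
    · exact (lintegral_rpow_enorm_lt_top_of_eLpNorm_lt_top hq0 hqt hg.2).ne
    · filter_upwards [hlim] with x hx
      have h2 : Tendsto (fun n => ‖F n x‖ₑ) atTop (𝓝 0) := by
        have := hx.enorm
        simpa using this
      have h3 := (ENNReal.continuous_rpow_const (y := q.toReal)).tendsto 0 |>.comp h2
      simpa [ENNReal.zero_rpow_of_pos hq, Function.comp_def] using h3
  have h4 := (ENNReal.continuous_rpow_const (y := 1 / q.toReal)).tendsto _ |>.comp h1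
  have h5 : 0 < 1 / q.toReal := by positivity
  simpa [ENNReal.zero_rpow_of_pos (inv_pos.2 hq), Function.comp_def] using h4

/-- A smooth bounded truncation. -/
theorem aux_trunc (M : ℝ) : ∃ T : ℝ → ℝ, ContDiff ℝ (⊤ : ℕ∞) T ∧ ∃ C : ℝ, 0 ≤ C ∧
    (∀ t, |T t| ≤ C) ∧ (∀ t, |deriv T t| ≤ C) ∧ ∀ t, |t| ≤ M → T t = t ∧ deriv T t = 1 := by
  let b : ContDiffBump (0 : ℝ) := ⟨|M| + 1, |M| + 2, by positivity, by linarith⟩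
  let T : ℝ → ℝ := fun t => t * b t
  have hT : ContDiff ℝ (⊤ : ℕ∞) T := contDiff_id.mul b.contDiff
  have hc : HasCompactSupport T := b.hasCompactSupport.mul_left
  have hd : Continuous (deriv T) := hT.continuous_deriv (by simp)
  obtain ⟨C1, h1⟩ := hc.exists_bound_of_continuous hT.continuous
  obtain ⟨C2, h2⟩ := hc.deriv.exists_bound_of_continuous hd
  have h0 : 0 ≤ C1 := (norm_nonneg _).trans (h1 0)
  refine ⟨T, hT, max C1 C2, le_max_of_le_left h0, fun t => (h1 t).trans (le_max_left _ _),
    fun t => (h2 t).trans (le_max_right _ _), fun t ht => ?_⟩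
  have key : ∀ s : ℝ, |s| < |M| + 1 → T s = s := by
    intro s hs
    have : b s = 1 := b.one_of_mem_closedBall (by simpa [b] using hs.le)
    simp [T, this]
  have ht' : |t| < |M| + 1 := by linarith [le_abs_self M]
  refine ⟨key t ht', ?_⟩
  have : T =ᶠ[𝓝 t] id := by
    have ho : IsOpen {s : ℝ | |s| < |M| + 1} := isOpen_lt continuous_abs continuous_const
    filter_upwards [ho.mem_nhds ht'] with s hs using key s hs
  rw [this.deriv_eq]; simp

theorem aux_grad {N : ℕ} (ζ ψ : EucN N → ℝ) (T : ℝ → ℝ) (x : EucN N)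
    (hζ : DifferentiableAt ℝ ζ x) (hψ : DifferentiableAt ℝ ψ x)
    (hT : DifferentiableAt ℝ T (ψ x)) :
    gradient (fun y => ζ y * T (ψ y)) x =
      T (ψ x) • gradient ζ x + (ζ x * deriv T (ψ x)) • gradient ψ x := by
  apply HasGradientAt.gradient
  rw [hasGradientAt_iff_hasFDerivAt]
  have h := hζ.hasFDerivAt.mul (hT.hasDerivAt.comp_hasFDerivAt x hψ.hasFDerivAt)
  have e : (InnerProductSpace.toDual ℝ (EucN N))
      (T (ψ x) • gradient ζ x + (ζ x * deriv T (ψ x)) • gradient ψ x) =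
      ζ x • (deriv T (ψ x) • fderiv ℝ ψ x) + (T ∘ ψ) x • fderiv ℝ ζ x := by
    ext y
    simp [inner_add_left, inner_smul_left, inner_gradient_left]
    ring
  rw [e]
  exact h

theorem aux_grad_cont {N : ℕ} (f : EucN N → ℝ) (hf : ContDiff ℝ (⊤ : ℕ∞) f) :
    Continuous (fun x => gradient f x) := by
  have h : Continuous (fderiv ℝ f) := hf.continuous_fderiv (by simp)
  exact (InnerProductSpace.toDual ℝ (EucN N)).symm.continuous.comp h

theorem aux_grad_supp {N : ℕ} (f : EucN N → ℝ) (hf : HasCompactSupport f) :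
    HasCompactSupport (fun x => gradient f x) := by
  exact (hf.fderiv (𝕜 := ℝ)).comp_left (g := (InnerProductSpace.toDual ℝ (EucN N)).symm)
    (map_zero _)

theorem aux_V {N : ℕ} {p : ℝ} (hp1 : 1 < p) (V ζ : EucN N → ℝ)
    (hV : LocallyIntegrable V volume) (hV0 : ∀ᵐ x, 0 ≤ V x) (hζ : Continuous ζ)
    (hc : HasCompactSupport ζ) :
    MemLp (fun x => (V x) ^ (1 / p) * ζ x) (ENNReal.ofReal p) volume := by
  have hp0 : 0 < p := by linarith
  have hm : AEStronglyMeasurable (fun x => (V x) ^ (1 / p) * ζ x) volume :=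
    ((hV.aestronglyMeasurable.aemeasurable.pow_const (1 / p)).aestronglyMeasurable).mul
      hζ.aestronglyMeasurable
  rw [← integrable_norm_rpow_iff hm (by simpa using hp0) ENNReal.ofReal_ne_top,
    ENNReal.toReal_ofReal hp0.le]
  have hz : Continuous (fun x => |ζ x| ^ p) := hζ.abs.rpow_const (fun _ => Or.inr hp0.le)
  have hzc : HasCompactSupport (fun x => |ζ x| ^ p) :=
    hc.comp_left (g := fun t : ℝ => |t| ^ p) (by simp [hp0.ne'])
  have h1 := hV.integrable_smul_left_of_hasCompactSupport hz hzc
  refine h1.congr ?_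
  filter_upwards [hV0] with x hx
  have hx1 : 0 ≤ V x ^ (1 / p) := Real.rpow_nonneg hx _
  rw [norm_mul, Real.norm_of_nonneg hx1, Real.mul_rpow hx1 (norm_nonneg _), ← Real.rpow_mul hx,
    one_div_mul_cancel hp0.ne', Real.rpow_one, Real.norm_eq_abs, smul_eq_mul, mul_comm]

theorem statement9 (N : ℕ) (p : ℝ) (hp1 : 1 < p) (Ω : Set (EucN N)) (hΩ : IsOpen Ω)
    (V : EucN N → ℝ) (hV : StronglyConfining N V)
    (ζ : EucN N → ℝ) (hζ : IsTestFun Ω ζ)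
    (w : SobPair N (ENNReal.ofReal p)) (hw : w ∈ W10 N p hp1.le Ω)
    (M : ℝ) (hbdd : ∀ᵐ x, |w.1 x| ≤ M) :
    ∃ ω ∈ W10V N p hp1.le Ω V,
      (⇑ω.1 =ᵐ[volume] fun x => ζ x * w.1 x) ∧
      (⇑ω.2.1 =ᵐ[volume] fun x => (w.1 x) • gradient ζ x + (ζ x) • w.2 x) ∧
      (⇑ω.2.2 =ᵐ[volume] fun x => (V x) ^ (1/p) * (ζ x * w.1 x)) := by
  haveI := fact_one_le_ofReal hp1.le
  have hp0 : 0 < p := by linarith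
  have hq0 : ENNReal.ofReal p ≠ 0 := by simpa using hp0
  have hqt : ENNReal.ofReal p ≠ ⊤ := ENNReal.ofReal_ne_top
  obtain ⟨hVl, hV0, -⟩ := hV
  obtain ⟨hζs, hζc, hζΩ⟩ := hζ
  obtain ⟨T, hT, C, hC0, hTC, hT'C, hTM⟩ := aux_trunc M
  have hTd : Continuous (deriv T) := hT.continuous_deriv (by simp)
  unfold W10 at hw
  obtain ⟨v', hv', hlim'⟩ := mem_closure_iff_seq_limit.1 hw
  obtain ⟨ns, hns, hae⟩ := (tendstoInMeasure_of_tendsto_Lp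
    ((continuous_fst.tendsto _).comp hlim')).exists_seq_tendsto_ae
  have hgl := (Lp.tendsto_Lp_iff_tendsto_eLpNorm' _ _).1
    (((continuous_snd.tendsto _).comp hlim').comp hns.tendsto_atTop)
  choose ψ hψ hψ1 hψ2 using fun n => hv' (ns n)
  have hae' : ∀ᵐ x, Tendsto (fun n => ψ n x) atTop (𝓝 (w.1 x)) := by
    filter_upwards [hae, ae_all_iff.2 hψ1] with x hx h1
    refine hx.congr fun n => ?_
    exact h1 n
  obtain ⟨Z, hZ⟩ := hζc.exists_bound_of_continuous hζs.continuous
  have hZ0 : 0 ≤ Z := (norm_nonneg _).trans (hZ 0)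
  have hGc := aux_grad_cont ζ hζs
  have hGs := aux_grad_supp ζ hζc
  have hm1 : AEStronglyMeasurable (w.1 : EucN N → ℝ) volume := Lp.aestronglyMeasurable _
  have hm2 : AEStronglyMeasurable (w.2 : EucN N → EucN N) volume := Lp.aestronglyMeasurable _
  have hVm : AEStronglyMeasurable (fun x => (V x) ^ (1 / p)) volume :=
    (hVl.aestronglyMeasurable.aemeasurable.pow_const (1 / p)).aestronglyMeasurable
  have hψc : ∀ n, Continuous (ψ n) := fun n => (hψ n).1.continuous
  have hmT : ∀ n, Continuous (fun x => T (ψ n x)) := fun n => hT.continuous.comp (hψc n)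
  have hmT' : ∀ n, Continuous (fun x => deriv T (ψ n x)) := fun n => hTd.comp (hψc n)
  have hM : ∀ᵐ x, T (w.1 x) = w.1 x ∧ deriv T (w.1 x) = 1 :=
    hbdd.mono fun x hx => hTM _ hx
  have hbC : ∀ᵐ x, |w.1 x| ≤ C := by
    filter_upwards [hM] with x hx
    rw [← hx.1]; exact hTC _
  have hTl : ∀ᵐ x, Tendsto (fun n => T (ψ n x)) atTop (𝓝 (w.1 x)) := by
    filter_upwards [hae', hM] with x hx h1
    have := (hT.continuous.tendsto (w.1 x)).comp hx
    rwa [h1.1] at this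
  have hT'l : ∀ᵐ x, Tendsto (fun n => deriv T (ψ n x)) atTop (𝓝 1) := by
    filter_upwards [hae', hM] with x hx h1
    have := (hTd.tendsto (w.1 x)).comp hx
    rwa [h1.2] at this
  -- the `L^p` bounds
  have hζp : MemLp ζ (ENNReal.ofReal p) volume := hζs.continuous.memLp_of_hasCompactSupport hζc
  have hGp : MemLp (fun x => gradient ζ x) (ENNReal.ofReal p) volume :=
    hGc.memLp_of_hasCompactSupport hGs
  have hVp := aux_V hp1 V ζ hVl hV0 hζs.continuous hζc
  have hgp : MemLp (w.2 : EucN N → EucN N) (ENNReal.ofReal p) volume := Lp.memLp _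
  -- memberships of the limit
  have hL1 : MemLp (fun x => ζ x * w.1 x) (ENNReal.ofReal p) volume := by
    refine hζp.of_le_mul (c := C) (hζs.continuous.aestronglyMeasurable.mul hm1) ?_
    filter_upwards [hbC] with x hx
    rw [norm_mul, mul_comm]
    exact mul_le_mul_of_nonneg_right hx (norm_nonneg _)
  have hL2 : MemLp (fun x => (w.1 x) • gradient ζ x + (ζ x) • w.2 x)
      (ENNReal.ofReal p) volume := by
    refine MemLp.add (f := fun x => (w.1 x) • gradient ζ x) (g := fun x => (ζ x) • w.2 x) ?_ ?_
    · refine hGp.of_le_mul (c := C) (hm1.smul hGc.aestronglyMeasurable) ?_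
      filter_upwards [hbC] with x hx
      rw [norm_smul]
      exact mul_le_mul_of_nonneg_right hx (norm_nonneg _)
    · refine hgp.of_le_mul (c := Z) (hζs.continuous.aestronglyMeasurable.smul hm2) ?_
      filter_upwards with x
      rw [norm_smul]
      exact mul_le_mul_of_nonneg_right (hZ x) (norm_nonneg _)
  have hL3 : MemLp (fun x => (V x) ^ (1 / p) * (ζ x * w.1 x)) (ENNReal.ofReal p) volume := by
    refine hVp.of_le_mul (c := C) (hVm.mul (hζs.continuous.aestronglyMeasurable.mul hm1)) ?_
    filter_upwards [hbC] with x hx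
    rw [← mul_assoc, norm_mul, mul_comm]
    exact mul_le_mul_of_nonneg_right hx (norm_nonneg _)
  -- the approximating test functions
  let χ : ℕ → EucN N → ℝ := fun n x => ζ x * T (ψ n x)
  have hχs : ∀ n, ContDiff ℝ (⊤ : ℕ∞) (χ n) := fun n => hζs.mul (hT.comp (hψ n).1)
  have hχc : ∀ n, HasCompactSupport (χ n) := fun n => hζc.mul_right
  have hχt : ∀ n, IsTestFun Ω (χ n) := fun n =>
    ⟨hχs n, hχc n, (tsupport_mul_subset_left).trans hζΩ⟩
  have hA1 : ∀ n, MemLp (χ n) (ENNReal.ofReal p) volume := fun n =>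
    (hχs n).continuous.memLp_of_hasCompactSupport (hχc n)
  have hA2 : ∀ n, MemLp (fun x => gradient (χ n) x) (ENNReal.ofReal p) volume := fun n =>
    (aux_grad_cont _ (hχs n)).memLp_of_hasCompactSupport (aux_grad_supp _ (hχc n))
  have hA3 : ∀ n, MemLp (fun x => (V x) ^ (1 / p) * χ n x) (ENNReal.ofReal p) volume := fun n =>
    aux_V hp1 V (χ n) hVl hV0 (hχs n).continuous (hχc n)
  have hgχ : ∀ n x, gradient (χ n) x =
      T (ψ n x) • gradient ζ x + (ζ x * deriv T (ψ n x)) • gradient (ψ n) x := fun n x =>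
    aux_grad ζ (ψ n) T x (hζs.differentiable (by simp) x)
      ((hψ n).1.differentiable (by simp) x) (hT.differentiable (by simp) _)
  -- convergence of the three components
  have hD : ∀ n, ∀ᵐ x, |T (ψ n x) - w.1 x| ≤ 2 * C := fun n => by
    filter_upwards [hbC] with x hx
    have := hTC (ψ n x)
    rw [abs_le] at *
    constructor <;> linarith [this.1, this.2, hx.1, hx.2]
  have hD0 : ∀ᵐ x, Tendsto (fun n => T (ψ n x) - w.1 x) atTop (𝓝 0) := by
    filter_upwards [hTl] with x hx
    simpa using hx.sub_const (w.1 x)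
  have hC1 : Tendsto (fun n => eLpNorm (χ n - fun x => ζ x * w.1 x) (ENNReal.ofReal p) volume)
      atTop (𝓝 0) := by
    refine aux_dct hq0 hqt _ (fun x => 2 * C * ‖ζ x‖)
      (fun n => (hA1 n).1.sub hL1.1) (hζp.norm.const_mul _) ?_ ?_
    · intro n
      filter_upwards [hD n] with x hx
      have : (χ n - fun x => ζ x * w.1 x) x = (T (ψ n x) - w.1 x) * ζ x := by
        simp only [χ, Pi.sub_apply]; ring
      rw [this, norm_mul]
      exact mul_le_mul_of_nonneg_right hx (norm_nonneg _)
    · filter_upwards [hD0] with x hx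
      have := hx.mul_const (ζ x)
      rw [zero_mul] at this
      refine this.congr fun n => ?_
      simp only [χ, Pi.sub_apply]; ring
  have hC3 : Tendsto (fun n => eLpNorm ((fun x => (V x) ^ (1 / p) * χ n x) -
      fun x => (V x) ^ (1 / p) * (ζ x * w.1 x)) (ENNReal.ofReal p) volume) atTop (𝓝 0) := by
    refine aux_dct hq0 hqt _ (fun x => 2 * C * ‖(V x) ^ (1 / p) * ζ x‖)
      (fun n => (hA3 n).1.sub hL3.1) (hVp.norm.const_mul _) ?_ ?_
    · intro n
      filter_upwards [hD n] with x hx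
      have : ((fun x => (V x) ^ (1 / p) * χ n x) - fun x => (V x) ^ (1 / p) * (ζ x * w.1 x)) x
          = (T (ψ n x) - w.1 x) * ((V x) ^ (1 / p) * ζ x) := by
        simp only [χ, Pi.sub_apply]; ring
      rw [this, norm_mul]
      exact mul_le_mul_of_nonneg_right hx (norm_nonneg _)
    · filter_upwards [hD0] with x hx
      have := hx.mul_const ((V x) ^ (1 / p) * ζ x)
      rw [zero_mul] at this
      refine this.congr fun n => ?_
      simp only [χ, Pi.sub_apply]; ring
  let P : ℕ → EucN N → EucN N := fun n x =>
    (T (ψ n x) - w.1 x) • gradient ζ x + (ζ x * (deriv T (ψ n x) - 1)) • w.2 x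
  let Q : ℕ → EucN N → EucN N := fun n x =>
    (ζ x * deriv T (ψ n x)) • (gradient (ψ n) x - w.2 x)
  have hPm : ∀ n, AEStronglyMeasurable (P n) volume := fun n =>
    (((hmT n).aestronglyMeasurable.sub hm1).smul hGc.aestronglyMeasurable).add
      ((hζs.continuous.mul ((hmT' n).sub continuous_const)).aestronglyMeasurable.smul hm2)
  have hQm : ∀ n, AEStronglyMeasurable (Q n) volume := fun n =>
    (hζs.continuous.mul (hmT' n)).aestronglyMeasurable.smul
      ((aux_grad_cont _ (hψ n).1).aestronglyMeasurable.sub hm2)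
  have hP : Tendsto (fun n => eLpNorm (P n) (ENNReal.ofReal p) volume) atTop (𝓝 0) := by
    refine aux_dct hq0 hqt P (fun x => 2 * C * ‖gradient ζ x‖ + Z * (C + 1) * ‖w.2 x‖) hPm
      ((hGp.norm.const_mul _).add (hgp.norm.const_mul _)) ?_ ?_
    · intro n
      filter_upwards [hD n] with x hx
      refine (norm_add_le _ _).trans ?_
      rw [norm_smul, norm_smul, norm_mul]
      have h1 : ‖deriv T (ψ n x) - 1‖ ≤ C + 1 := by
        refine (norm_sub_le _ _).trans ?_
        have := hT'C (ψ n x)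
        rw [norm_one, Real.norm_eq_abs]; linarith
      have h2 : ‖ζ x‖ * ‖deriv T (ψ n x) - 1‖ ≤ Z * (C + 1) :=
        mul_le_mul (hZ x) h1 (norm_nonneg _) hZ0
      exact add_le_add (mul_le_mul_of_nonneg_right hx (norm_nonneg _))
        (mul_le_mul_of_nonneg_right h2 (norm_nonneg _))
    · filter_upwards [hD0, hT'l] with x hx h1
      have := (hx.smul_const (gradient ζ x)).add
        (((h1.sub_const 1).const_mul (ζ x)).smul_const (w.2 x))
      simpa using this
  have hQ : Tendsto (fun n => eLpNorm (Q n) (ENNReal.ofReal p) volume) atTop (𝓝 0) := by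
    have h0 := ENNReal.Tendsto.const_mul (a := ENNReal.ofReal (Z * C)) hgl
      (Or.inr ENNReal.ofReal_ne_top)
    rw [mul_zero] at h0
    refine tendsto_of_tendsto_of_tendsto_of_le_of_le tendsto_const_nhds h0
      (fun n => zero_le) fun n => ?_
    refine eLpNorm_le_mul_eLpNorm_of_ae_le_mul ?_ _
    filter_upwards [hψ2 n] with x hx
    simp only [Q, Function.comp, Pi.sub_apply]
    rw [hx, norm_smul, norm_mul]
    refine mul_le_mul_of_nonneg_right ?_ (norm_nonneg _)
    exact mul_le_mul (hZ x) (hT'C _) (norm_nonneg _) hZ0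
  have hC2 : Tendsto (fun n => eLpNorm ((fun x => gradient (χ n) x) -
      fun x => (w.1 x) • gradient ζ x + (ζ x) • w.2 x) (ENNReal.ofReal p) volume)
      atTop (𝓝 0) := by
    have h0 := hP.add hQ
    rw [add_zero] at h0
    refine tendsto_of_tendsto_of_tendsto_of_le_of_le tendsto_const_nhds h0
      (fun n => zero_le) fun n => ?_
    have : ((fun x => gradient (χ n) x) -
      fun x => (w.1 x) • gradient ζ x + (ζ x) • w.2 x) = P n + Q n := by
      funext x
      simp only [Pi.sub_apply, Pi.add_apply, P, Q, hgχ]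
      module
    simp only [this]
    exact eLpNorm_add_le (hPm n) (hQm n) Fact.out
  refine ⟨(hL1.toLp _, hL2.toLp _, hL3.toLp _), ?_, hL1.coeFn_toLp, hL2.coeFn_toLp,
    hL3.coeFn_toLp⟩
  unfold W10V
  refine mem_closure_of_tendsto (b := atTop)
    (f := fun n => ((hA1 n).toLp _, (hA2 n).toLp _, (hA3 n).toLp _)) ?_ ?_
  · exact ((Lp.tendsto_Lp_iff_tendsto_eLpNorm'' _ hA1 _ hL1).2 hC1).prodMk_nhds
      (((Lp.tendsto_Lp_iff_tendsto_eLpNorm'' _ hA2 _ hL2).2 hC2).prodMk_nhds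
        ((Lp.tendsto_Lp_iff_tendsto_eLpNorm'' _ hA3 _ hL3).2 hC3))
  · exact Eventually.of_forall fun n => ⟨χ n, hχt n, (hA1 n).coeFn_toLp, (hA2 n).coeFn_toLp,
      (hA3 n).coeFn_toLp⟩

end
end

section
/- Let 1<p<∞ and let Ω ⊆ ℝ^N be an open set with λ_{1,p}(Ω) > 0. Let X(Ω) be a Banach space such that C_c^∞(Ω) ⊆ X(Ω) and X(Ω) ⊆ W^{1,p}_0(Ω) with continuous inclusion, i.e. there is C > 0 with ‖∇φ‖_{L^p(Ω)} ≤ C ‖φ‖_{X(Ω)} for every φ ∈ X(Ω). Set X_{k,p}(Ω) := {K ⊆ S_p(Ω) ∩ X(Ω) : K symmetric and compact in the norm topology of X(Ω), γ(K;X(Ω)) ≥ k}. Then for every K ∈ W_{k,p}(Ω) and every δ > 0 there exists K_δ ∈ X_{k,p}(Ω) such that max_{φ ∈ K_δ} ∫_Ω |∇φ|^p dx ≤ max_{φ ∈ K} ∫_Ω |∇φ|^p dx + δ. -/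
open MeasureTheory Filter Topology Metric Set ENNReal
open scoped RealInnerProductSpace

noncomputable section

/-- Odd Schauder-type projection onto a finite dimensional subspace, lifted along `ι`. -/
theorem odd_schauder {E X : Type*} [NormedAddCommGroup E] [NormedSpace ℝ E]
    [NormedAddCommGroup X] [NormedSpace ℝ X] (ι : X →ₗ[ℝ] E) (K : Set E)
    (hKc : IsCompact K) (hKs : ∀ w ∈ K, -w ∈ K) (hKr : K ⊆ closure (Set.range ι))
    (ε : ℝ) (hε : 0 < ε) :
    ∃ Q : E → X, ContinuousOn Q K ∧ ContinuousOn (fun w => ι (Q w)) K ∧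
      (∀ w, Q (-w) = -Q w) ∧ ∀ w ∈ K, ‖ι (Q w) - w‖ ≤ ε := by
  classical
  obtain ⟨t, ht⟩ := hKc.elim_finite_subcover (fun x : X => ball (ι x) ε)
    (fun x => isOpen_ball) (by
      intro w hw
      obtain ⟨y, ⟨x, rfl⟩, hy⟩ := Metric.mem_closure_iff.1 (hKr hw) ε hε
      exact Set.mem_iUnion.2 ⟨x, hy⟩)
  let ρ : X → E → ℝ := fun x w => max 0 (ε - dist w (ι x))
  have hρc : ∀ x, Continuous (ρ x) := fun x => by fun_prop
  have hρ0 : ∀ x w, 0 ≤ ρ x w := fun x w => le_max_left _ _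
  let S : E → ℝ := fun w => ∑ x ∈ t, ρ x w
  have hSc : Continuous S := continuous_finsetSum _ fun x _ => hρc x
  have hSpos : ∀ w ∈ K, 0 < S w := by
    intro w hw
    obtain ⟨x, hx, hwx⟩ := Set.mem_iUnion₂.1 (ht hw)
    refine Finset.sum_pos' (fun x _ => hρ0 x w) ⟨x, hx, ?_⟩
    have : dist w (ι x) < ε := hwx
    exact lt_max_of_lt_right (by linarith)
  let B : E → X := fun w => (S w)⁻¹ • ∑ x ∈ t, ρ x w • x
  have hιB : ∀ w, ι (B w) = (S w)⁻¹ • ∑ x ∈ t, ρ x w • ι x := by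
    intro w; simp [B, map_sum]
  have hSi : ContinuousOn (fun w => (S w)⁻¹) K :=
    hSc.continuousOn.inv₀ fun w hw => (hSpos w hw).ne'
  have hBc : ContinuousOn B K := hSi.smul
    (continuous_finsetSum _ fun x _ => (hρc x).smul continuous_const).continuousOn
  have hιBc : ContinuousOn (fun w => ι (B w)) K := by
    simp only [hιB]
    exact hSi.smul
      (continuous_finsetSum _ fun x _ => (hρc x).smul continuous_const).continuousOn
  have hBe : ∀ w ∈ K, ‖ι (B w) - w‖ ≤ ε := by
    intro w hw
    have hS := hSpos w hw
    have h1 : ι (B w) - w = (S w)⁻¹ • ∑ x ∈ t, ρ x w • (ι x - w) := by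
      rw [hιB]
      simp only [smul_sub, Finset.sum_sub_distrib, ← Finset.sum_smul]
      congr 1
      rw [smul_smul, inv_mul_cancel₀ hS.ne', one_smul]
    have h2 : ‖∑ x ∈ t, ρ x w • (ι x - w)‖ ≤ S w * ε := by
      refine (norm_sum_le _ _).trans ?_
      rw [Finset.sum_mul]
      refine Finset.sum_le_sum fun x _ => ?_
      rw [norm_smul, Real.norm_of_nonneg (hρ0 x w)]
      by_cases h : dist w (ι x) ≤ ε
      · refine mul_le_mul_of_nonneg_left ?_ (hρ0 x w)
        rw [← dist_eq_norm, dist_comm]; exact h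
      · have : ρ x w = 0 := max_eq_left (by push Not at h; linarith)
        simp [this]
    rw [h1, norm_smul, norm_inv, Real.norm_of_nonneg hS.le, inv_mul_le_iff₀ hS]
    exact h2
  have hneg : ContinuousOn (fun w : E => -w) K := continuous_neg.continuousOn
  have hmaps : MapsTo (fun w : E => -w) K K := hKs
  refine ⟨fun w => (1/2 : ℝ) • (B w - B (-w)), ?_, ?_, ?_, ?_⟩
  · exact (hBc.sub (hBc.comp hneg hmaps)).const_smul _
  · simp only [map_smul, map_sub]
    exact (hιBc.sub (hιBc.comp hneg hmaps)).const_smul _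
  · intro w
    simp only [neg_neg]
    rw [← smul_neg, neg_sub]
  · intro w hw
    have e : ι ((1/2 : ℝ) • (B w - B (-w))) - w
        = (1/2 : ℝ) • ((ι (B w) - w) - (ι (B (-w)) - (-w))) := by
      simp only [map_smul, map_sub]
      module
    rw [e, norm_smul]
    have h3 := norm_sub_le (ι (B w) - w) (ι (B (-w)) - (-w))
    have h4 := hBe w hw
    have h5 := hBe (-w) (hKs w hw)
    norm_num
    norm_num at h3 h5
    linarith

theorem abstract_approx {F G X : Type*} [NormedAddCommGroup F] [NormedSpace ℝ F]
    [NormedAddCommGroup G] [NormedSpace ℝ G]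
    [NormedAddCommGroup X] [NormedSpace ℝ X] (ι : X →ₗ[ℝ] F × G) (K : Set (F × G))
    (hKc : IsCompact K) (hKs : ∀ w ∈ K, -w ∈ K) (hKr : K ⊆ closure (Set.range ι))
    (hK1 : ∀ w ∈ K, ‖w.1‖ = 1) (k : ℕ) (hg : genusGE K k) (p : ℝ) (hp : 1 < p)
    (δ : ℝ) (hδ : 0 < δ) :
    ∃ Kd : Set X, ((∀ x ∈ Kd, ‖(ι x).1‖ = 1) ∧ (∀ x ∈ Kd, -x ∈ Kd) ∧
      IsCompact Kd ∧ genusGE Kd k) ∧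
      ∀ x ∈ Kd, ∃ w ∈ K, ‖(ι x).2‖ ^ p ≤ ‖w.2‖ ^ p + δ := by
  rcases K.eq_empty_or_nonempty with rfl | hne
  · refine ⟨∅, ⟨by simp, by simp, isCompact_empty, ?_⟩, by simp⟩
    intro j _
    exact (hg 0 ⟨fun _ => 0, by simp, by simp, by simp⟩).trans (Nat.zero_le _)
  obtain ⟨w₀, hw₀, hmax⟩ := hKc.exists_isMaxOn hne
    (f := fun w : F × G => ‖w.2‖) (by fun_prop)
  have hmax' : ∀ w ∈ K, ‖w.2‖ ≤ ‖w₀.2‖ := fun w hw => hmax hw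
  set M := ‖w₀.2‖ with hM
  have hM0 : 0 ≤ M := norm_nonneg _
  obtain ⟨ε, hε0, hε1, hε⟩ : ∃ ε : ℝ, 0 < ε ∧ ε < 1 ∧ ((M + ε) / (1 - ε)) ^ p ≤ M ^ p + δ := by
    have hc : ContinuousAt (fun ε : ℝ => ((M + ε) / (1 - ε)) ^ p) 0 := by
      refine ContinuousAt.rpow_const (ContinuousAt.div ?_ ?_ (by norm_num)) (Or.inr (by linarith))
      · fun_prop
      · fun_prop
    have h1 : ∀ᶠ ε in 𝓝 (0:ℝ), ((M + ε) / (1 - ε)) ^ p < M ^ p + δ := by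
      apply hc.eventually_lt_const
      simpa using hδ
    have h2 : ∀ᶠ ε in 𝓝 (0:ℝ), ε < 1 := eventually_lt_nhds one_pos
    have h3 : ∀ᶠ ε in 𝓝[>] (0:ℝ), 0 < ε := eventually_mem_nhdsWithin
    obtain ⟨ε, h, h', h''⟩ := (h3.and ((h2.and h1).filter_mono nhdsWithin_le_nhds)).exists
    exact ⟨ε, h, h', h''.le⟩
  obtain ⟨Q, hQc, hιQc, hQo, hQe⟩ := odd_schauder ι K hKc hKs hKr ε hε0
  let n : F × G → ℝ := fun w => ‖(ι (Q w)).1‖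
  have hnc : ContinuousOn n K := (continuous_fst.comp_continuousOn hιQc).norm
  have hn : ∀ w ∈ K, 1 - ε ≤ n w := by
    intro w hw
    have h1 : ‖(ι (Q w)).1 - w.1‖ ≤ ε := (norm_fst_le (ι (Q w) - w)).trans (hQe w hw)
    have h2 := norm_sub_norm_le w.1 (ι (Q w)).1
    rw [norm_sub_rev, hK1 w hw] at h2
    show 1 - ε ≤ ‖(ι (Q w)).1‖
    linarith
  have hnpos : ∀ w ∈ K, 0 < n w := fun w hw => by linarith [hn w hw]
  let R : F × G → X := fun w => (n w)⁻¹ • Q w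
  have hRc : ContinuousOn R K := (hnc.inv₀ fun w hw => (hnpos w hw).ne').smul hQc
  have hRo : ∀ w, R (-w) = - R w := by
    intro w
    simp [R, n, hQo]
  refine ⟨R '' K, ⟨?_, ?_, hKc.image_of_continuousOn hRc, ?_⟩, ?_⟩
  · rintro _ ⟨w, hw, rfl⟩
    have := hnpos w hw
    simp only [R, map_smul, Prod.smul_fst, norm_smul, norm_inv, Real.norm_of_nonneg this.le]
    exact inv_mul_cancel₀ this.ne'
  · rintro _ ⟨w, hw, rfl⟩
    exact ⟨-w, hKs w hw, hRo w⟩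
  · rintro j ⟨f, hfc, hf1, hfo⟩
    refine hg j ⟨fun w => f (R w), hfc.comp hRc (mapsTo_image _ _), ?_, ?_⟩
    · intro w hw
      exact hf1 _ ⟨w, hw, rfl⟩
    · intro w hw
      simp only [hRo]
      exact hfo _ ⟨w, hw, rfl⟩
  · rintro _ ⟨w, hw, rfl⟩
    refine ⟨w₀, hw₀, le_trans (Real.rpow_le_rpow (norm_nonneg _) ?_ (by linarith)) hε⟩
    have hp' := hnpos w hw
    simp only [R, map_smul, Prod.smul_snd, norm_smul, norm_inv, Real.norm_of_nonneg hp'.le]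
    have h1 : ‖(ι (Q w)).2 - w.2‖ ≤ ε := (norm_snd_le (ι (Q w) - w)).trans (hQe w hw)
    have h2 := norm_sub_norm_le (ι (Q w)).2 w.2
    have h3 := hmax' w hw
    rw [inv_mul_eq_div]
    exact div_le_div₀ (by linarith) (by linarith) (by linarith) (hn w hw)

theorem integral_norm_rpow_eq {N : ℕ} {F : Type*} [NormedAddCommGroup F] (p : ℝ) (hp1 : 1 < p)
    (f : Lp F (ENNReal.ofReal p) (volume : Measure (EucN N))) :
    (∫ x, ‖f x‖ ^ p) = ‖f‖ ^ p := by
  have hp0 : 0 < p := by linarith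
  have h := (Lp.memLp f).eLpNorm_eq_integral_rpow_norm
    (by simpa using hp0) ENNReal.ofReal_ne_top
  have hI : 0 ≤ ∫ x, ‖f x‖ ^ p := integral_nonneg fun x => Real.rpow_nonneg (norm_nonneg _) _
  rw [Lp.norm_def, h, ENNReal.toReal_ofReal hp0.le,
    ENNReal.toReal_ofReal (Real.rpow_nonneg hI _), ← Real.rpow_mul hI,
    inv_mul_cancel₀ hp0.ne', Real.rpow_one]

theorem statement13 (N : ℕ) (p : ℝ) (hp1 : 1 < p) (Ω : Set (EucN N)) (hΩ : IsOpen Ω)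
    (hl : 0 < lambda1p N p hp1.le Ω)
    (X : Type) [NormedAddCommGroup X] [NormedSpace ℝ X] [CompleteSpace X]
    (ι : X →ₗ[ℝ] SobPair N (ENNReal.ofReal p)) (hinj : Function.Injective ι)
    (hrange : ∀ x : X, ι x ∈ W10 N p hp1.le Ω)
    (htest : ∀ w : SobPair N (ENNReal.ofReal p), IsTestPair (ENNReal.ofReal p) Ω w →
      ∃ x : X, ι x = w)
    (C : ℝ) (hC : 0 < C) (hcont : ∀ x : X, (∫ y, ‖(ι x).2 y‖ ^ p) ^ (1/p) ≤ C * ‖x‖)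
    (k : ℕ) (K : Set (SobPair N (ENNReal.ofReal p))) (hK : K ∈ SobClass N p hp1.le Ω k)
    (δ : ℝ) (hδ : 0 < δ) :
    ∃ Kd : Set X,
      ((∀ x ∈ Kd, (∫ y, |(ι x).1 y| ^ p) = 1) ∧ (∀ x ∈ Kd, -x ∈ Kd) ∧
        IsCompact Kd ∧ genusGE Kd k) ∧
      (⨆ x ∈ Kd, ENNReal.ofReal (∫ y, ‖(ι x).2 y‖ ^ p)) ≤
        (⨆ w ∈ K, ENNReal.ofReal (∫ y, ‖w.2 y‖ ^ p)) + ENNReal.ofReal δ := by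
  have := fact_one_le_ofReal hp1.le
  obtain ⟨hKW, hK1, hKs, hKc, hKg⟩ := hK
  have hp0 : 0 < p := by linarith
  have hone : ∀ f : Lp ℝ (ENNReal.ofReal p) (volume : Measure (EucN N)),
      (∫ x, |f x| ^ p) = 1 ↔ ‖f‖ = 1 := by
    intro f
    have h := integral_norm_rpow_eq p hp1 f
    simp only [Real.norm_eq_abs] at h
    rw [h]
    constructor
    · intro h1
      have h2 : (‖f‖ ^ p) ^ (p⁻¹) = 1 := by rw [h1, Real.one_rpow]
      rwa [Real.rpow_rpow_inv (norm_nonneg _) hp0.ne'] at h2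
    · intro h1
      rw [h1, Real.one_rpow]
  have hKr : K ⊆ closure (Set.range ι) := by
    refine hKW.trans (closure_mono ?_)
    intro w hw
    exact htest w hw
  obtain ⟨Kd, ⟨h1, h2, h3, h4⟩, h5⟩ := abstract_approx ι K hKc hKs hKr
    (fun w hw => (hone _).1 (hK1 w hw)) k hKg p hp1 δ hδ
  refine ⟨Kd, ⟨fun x hx => (hone _).2 (h1 x hx), h2, h3, h4⟩, ?_⟩
  refine iSup₂_le fun x hx => ?_
  obtain ⟨w, hw, hxw⟩ := h5 x hx
  calc ENNReal.ofReal (∫ y, ‖(ι x).2 y‖ ^ p)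
      ≤ ENNReal.ofReal ((∫ y, ‖w.2 y‖ ^ p) + δ) := by
        apply ENNReal.ofReal_le_ofReal
        rw [integral_norm_rpow_eq p hp1, integral_norm_rpow_eq p hp1]
        exact hxw
    _ ≤ ENNReal.ofReal (∫ y, ‖w.2 y‖ ^ p) + ENNReal.ofReal δ := ENNReal.ofReal_add_le
    _ ≤ _ := by
        gcongr
        exact le_iSup₂ (f := fun (w : SobPair N (ENNReal.ofReal p)) (_ : w ∈ K) =>
          ENNReal.ofReal (∫ y, ‖w.2 y‖ ^ p)) w hw

end
end
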